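/- For every integer d ≥ 1 there exist constants c, C > 0 such that for every integer N ≥ 2, every set A ⊆ [N] containing no non-trivial solutions to the equation x₁ + x₂ + d·x₃ + d·x₄ = 2y₁ + 2d·y₂ satisfies |A| ≤ C · e^{−c·(log N)^{1/9}} · N^{1/2}. -/

import Mathlib

open Finset
set_option linter.unusedSectionVars false
set_option linter.unusedVariables false

section KM
variable {G : Type*} [AddCommGroup G] [Fintype G]

def kmCr (φ f : G → ℝ) : G → ℝ := fun y => ∑ s, φ s * f (y + s)
def kmAc (f : G → ℝ) (t : G) : ℝ := ∑ x, f x * f (x + t)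
def kmCv (f : G → ℝ) (t : G) : ℝ := ∑ x, f x * f (t - x)

lemma kmAc_sub (f : G → ℝ) (u v : G) : kmAc f (u - v) = ∑ x, f (x + u) * f (x + v) := by
  unfold kmAc
  rw [← Equiv.sum_comp (Equiv.addRight v)]
  refine Finset.sum_congr rfl fun x _ => ?_
  simp only [Equiv.coe_addRight]
  rw [mul_comm]; congr 2; abel

lemma kmCv_sub (f : G → ℝ) (u v : G) : kmCv f (u - v) = ∑ x, f (x + u) * f (-x - v) := by
  unfold kmCv
  rw [← Equiv.sum_comp (Equiv.addRight u)]
  refine Finset.sum_congr rfl fun x _ => ?_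
  simp only [Equiv.coe_addRight]
  congr 2; abel

lemma kmAc_sub' (f : G → ℝ) (u v : G) : kmAc f (u - v) = ∑ x, f (-x - u) * f (-x - v) := by
  rw [show u - v = (-v) - (-u) by abel, kmAc_sub, ← Equiv.sum_comp (Equiv.neg G)]
  refine Finset.sum_congr rfl fun x _ => ?_
  simp only [Equiv.neg_apply]
  rw [mul_comm, sub_eq_add_neg, sub_eq_add_neg]

/-- generic expansion -/
lemma km_expand (η : G → ℝ) (F H : G → G → ℝ) (k : ℕ) (T : G → G → ℝ)
    (hT : ∀ u v, T u v = ∑ x, F x u * H x v) (Y : G → G → ℝ) :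
    ∑ u, ∑ v, η u * η v * (T u v) ^ k * Y u v =
      ∑ x : Fin k → G, ∑ u, ∑ v, (η u * ∏ i, F (x i) u) * (η v * ∏ i, H (x i) v) * Y u v := by
  rw [Finset.sum_comm]
  simp_rw [hT, Fintype.sum_pow, Finset.mul_sum, Finset.sum_mul]
  rw [Finset.sum_comm]
  conv_rhs => rw [Finset.sum_comm]
  refine Finset.sum_congr rfl fun u _ => ?_
  rw [Finset.sum_comm]
  refine Finset.sum_congr rfl fun x _ => ?_
  refine Finset.sum_congr rfl fun v _ => ?_
  rw [Finset.prod_mul_distrib]; ring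

lemma km_expand_one (η : G → ℝ) (F H : G → G → ℝ) (k : ℕ) (T : G → G → ℝ)
    (hT : ∀ u v, T u v = ∑ x, F x u * H x v) :
    ∑ u, ∑ v, η u * η v * (T u v) ^ k =
      ∑ x : Fin k → G, (∑ u, η u * ∏ i, F (x i) u) * (∑ v, η v * ∏ i, H (x i) v) := by
  have := km_expand η F H k T hT (fun _ _ => 1)
  simp only [mul_one] at this
  rw [this]
  refine Finset.sum_congr rfl fun x _ => ?_
  rw [Finset.sum_mul_sum]

lemma km_ac_pow (η g : G → ℝ) (k : ℕ) :
    ∑ u, ∑ v, η u * η v * (kmAc g (u - v)) ^ k =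
      ∑ x : Fin k → G, (∑ u, η u * ∏ i, g (x i + u)) ^ 2 := by
  rw [km_expand_one η (fun x u => g (x + u)) (fun x u => g (x + u)) k _ (fun u v => kmAc_sub g u v)]
  simp_rw [sq]

lemma km_ac_pow' (η g : G → ℝ) (k : ℕ) :
    ∑ u, ∑ v, η u * η v * (kmAc g (u - v)) ^ k =
      ∑ x : Fin k → G, (∑ u, η u * ∏ i, g (-(x i) - u)) ^ 2 := by
  rw [km_expand_one η (fun x u => g (-x - u)) (fun x u => g (-x - u)) k _ (fun u v => kmAc_sub' g u v)]
  simp_rw [sq]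

lemma km_ac_pow_nonneg (η g : G → ℝ) (k : ℕ) :
    0 ≤ ∑ u, ∑ v, η u * η v * (kmAc g (u - v)) ^ k := by
  rw [km_ac_pow]; positivity

lemma km_decouple (η g : G → ℝ) (k : ℕ) :
    ∑ u, ∑ v, η u * η v * (kmCv g (u - v)) ^ k ≤ ∑ u, ∑ v, η u * η v * (kmAc g (u - v)) ^ k := by
  rw [km_expand_one η (fun x u => g (x + u)) (fun x u => g (-x - u)) k _ (fun u v => kmCv_sub g u v)]
  have h1 := km_ac_pow η g k
  have h2 := km_ac_pow' η g k
  have : ∑ u, ∑ v, η u * η v * (kmAc g (u - v)) ^ k =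
    ∑ x : Fin k → G, ((∑ u, η u * ∏ i, g (x i + u)) ^ 2 + (∑ u, η u * ∏ i, g (-(x i) - u)) ^ 2) / 2 := by
    rw [← Finset.sum_div, Finset.sum_add_distrib, ← h1, ← h2]; ring
  rw [this]
  refine Finset.sum_le_sum fun x _ => ?_
  nlinarith [sq_nonneg ((∑ u, η u * ∏ i, g (x i + u)) - (∑ u, η u * ∏ i, g (-(x i) - u)))]

/-- Hölder step -/
lemma km_holder {ι : Type*} (s : Finset ι) (W X h : ι → ℝ) (hW : ∀ i, 0 ≤ W i)
    (hX0 : ∀ i, 0 ≤ X i) (hX1 : ∀ i, X i ≤ 1) (p : ℕ) (hp : Even p) (v β : ℝ) (hv : 0 ≤ v)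
    (hβ : 0 < β) (hs : ∑ i ∈ s, W i * X i = β) (hh : ∑ i ∈ s, W i * X i * h i ≤ -(v * β)) :
    β * v ^ p ≤ ∑ i ∈ s, W i * (h i) ^ p := by
  have hc : ConvexOn ℝ Set.univ (fun x : ℝ => x ^ p) := hp.convexOn_pow
  have := hc.map_sum_le (t := s) (w := fun i => W i * X i / β) (p := h)
    (fun i _ => div_nonneg (mul_nonneg (hW i) (hX0 i)) hβ.le)
    (by rw [← Finset.sum_div, hs, div_self hβ.ne']) (fun _ _ => trivial)
  simp only [smul_eq_mul] at this
  have h1 : ∑ i ∈ s, W i * X i / β * h i = (∑ i ∈ s, W i * X i * h i) / β := by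
    rw [Finset.sum_div]; exact Finset.sum_congr rfl fun i _ => by ring
  have h2 : ∑ i ∈ s, W i * X i / β * h i ^ p = (∑ i ∈ s, W i * X i * h i ^ p) / β := by
    rw [Finset.sum_div]; exact Finset.sum_congr rfl fun i _ => by ring
  rw [h1, h2] at this
  have h3 : v ^ p ≤ ((∑ i ∈ s, W i * X i * h i) / β) ^ p := by
    rw [← hp.neg_pow ((∑ i ∈ s, W i * X i * h i) / β)]
    refine pow_le_pow_left₀ hv ?_ p
    rw [← neg_div, le_div_iff₀ hβ]; linarith
  have h4 := h3.trans this
  rw [le_div_iff₀ hβ] at h4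
  calc β * v ^ p = v ^ p * β := mul_comm _ _
    _ ≤ _ := h4
    _ ≤ _ := Finset.sum_le_sum fun i _ => by
      have := hp.pow_nonneg (h i)
      have h5 := hW i
      have h6 := hX1 i
      have : 0 ≤ W i * h i ^ p := by positivity
      nlinarith

lemma km_choose (p : ℕ) : 8 ^ p ≤ (8 * p).choose p := by
  have h : ∏ i ∈ range p, (8 * (p - i)) ≤ ∏ i ∈ range p, (8 * p - i) :=
    Finset.prod_le_prod' fun i hi => by simp at hi; omega
  rw [Finset.prod_mul_distrib, ← Nat.descFactorial_eq_prod_range, ← Nat.descFactorial_eq_prod_range,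
    Nat.descFactorial_self, Finset.prod_const, Finset.card_range,
    Nat.descFactorial_eq_factorial_mul_choose, mul_comm] at h
  exact Nat.le_of_mul_le_mul_left h (Nat.factorial_pos p)

lemma km_unbalance (η g : G → ℝ) (p : ℕ) (c : ℝ) (hc : 0 < c)
    (h : (c / 4) ^ p ≤ ∑ u, ∑ v, η u * η v * (kmAc g (u - v)) ^ p) :
    2 ^ p * c ^ (8 * p) ≤ ∑ u, ∑ v, η u * η v * (c + kmAc g (u - v)) ^ (8 * p) := by
  have e : ∑ u, ∑ v, η u * η v * (c + kmAc g (u - v)) ^ (8 * p) =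
      ∑ k ∈ range (8 * p + 1), c ^ (8 * p - k) * ((8 * p).choose k) *
        ∑ u, ∑ v, η u * η v * (kmAc g (u - v)) ^ k := by
    simp_rw [add_comm c, add_pow, Finset.mul_sum]
    conv_rhs => rw [Finset.sum_comm]
    refine Finset.sum_congr rfl fun u _ => ?_
    rw [Finset.sum_comm]
    refine Finset.sum_congr rfl fun x _ => ?_
    refine Finset.sum_congr rfl fun v _ => ?_
    ring
  rw [e]
  have h2 := Finset.single_le_sum (f := fun k => c ^ (8 * p - k) * ((8 * p).choose k) *
        ∑ u, ∑ v, η u * η v * (kmAc g (u - v)) ^ k) (s := range (8 * p + 1))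
     (fun k _ => by have := km_ac_pow_nonneg η g k; positivity) (Finset.mem_range.2 (show p < 8 * p + 1 by omega))
  refine le_trans ?_ h2
  have h3 : (8 : ℝ) ^ p ≤ ((8 * p).choose p : ℝ) := by exact_mod_cast km_choose p
  calc (2:ℝ) ^ p * c ^ (8 * p) = c ^ (8 * p - p) * 8 ^ p * (c / 4) ^ p := by
        have : c ^ (8 * p) = c ^ (8 * p - p) * c ^ p := by rw [← pow_add]; congr 1; omega
        rw [this, div_pow, show (8:ℝ) = 2 * 4 by norm_num, mul_pow]; field_simp
    _ ≤ _ := by gcongr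
end KM

open Finset
set_option linter.unusedSectionVars false
set_option linter.unusedVariables false

section KM2
variable {G : Type*} [AddCommGroup G] [Fintype G]

structure KmW (f w l : G → ℝ) (α : ℝ) : Prop where
  f01 : ∀ x, f x = 0 ∨ f x = 1
  wpos : ∀ x, 0 < w x
  wsym : ∀ x, w (-x) = w x
  wsum : ∑ x, w x ^ 2 = 1
  l0 : ∀ x, 0 ≤ l x
  lsym : ∀ x, l (-x) = l x
  wl : ∀ x t, w (x + t) ≤ Real.exp (l t) * w x
  hα : ∑ x, f x * w x ^ 2 = α
  αpos : 0 < α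

variable {f w l : G → ℝ} {α : ℝ}

lemma KmW.f0 (h : KmW f w l α) (x : G) : 0 ≤ f x := by rcases h.f01 x with h | h <;> rw [h]; norm_num
lemma KmW.f1 (h : KmW f w l α) (x : G) : f x ≤ 1 := by rcases h.f01 x with h | h <;> rw [h]; norm_num

lemma KmW.wl' (h : KmW f w l α) (x t : G) : Real.exp (-l t) * w x ≤ w (x + t) := by
  have := h.wl (x + t) (-t)
  rw [add_neg_cancel_right, h.lsym] at this
  rw [Real.exp_neg, inv_mul_le_iff₀ (Real.exp_pos _)]; exact this

lemma KmW.V_le (h : KmW f w l α) (t : G) : ∑ x, w x * w (x + t) ≤ 1 := by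
  have h1 := h.wsum
  have h2 : ∑ x, w (x + t) ^ 2 = 1 := by
    rw [← h1]; exact Equiv.sum_comp (Equiv.addRight t) (fun x => w x ^ 2)
  have : ∑ x, w x * w (x + t) ≤ ∑ x, (w x ^ 2 + w (x + t) ^ 2) / 2 :=
    Finset.sum_le_sum fun x _ => by nlinarith [sq_nonneg (w x - w (x + t))]
  rw [← Finset.sum_div, Finset.sum_add_distrib, h1, h2] at this
  linarith

lemma KmW.V_ge (h : KmW f w l α) (t : G) : Real.exp (-l t) ≤ ∑ x, w x * w (x + t) := by
  calc Real.exp (-l t) = ∑ x, Real.exp (-l t) * w x ^ 2 := by rw [← Finset.mul_sum, h.wsum, mul_one]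
    _ ≤ _ := Finset.sum_le_sum fun x _ => by
      have := h.wl' x t
      have h2 := h.wpos x
      nlinarith

lemma KmW.Y_le (h : KmW f w l α) (t : G) : ∑ x, f x * w x * w (x + t) ≤ Real.exp (l t) * α := by
  rw [← h.hα, Finset.mul_sum]
  exact Finset.sum_le_sum fun x _ => by
      have := mul_le_mul_of_nonneg_left (h.wl x t) (mul_nonneg (h.f0 x) (h.wpos x).le)
      nlinarith

lemma KmW.Y_ge (h : KmW f w l α) (t : G) : Real.exp (-l t) * α ≤ ∑ x, f x * w x * w (x + t) := by
  rw [← h.hα, Finset.mul_sum]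
  exact Finset.sum_le_sum fun x _ => by
      have := mul_le_mul_of_nonneg_left (h.wl' x t) (mul_nonneg (h.f0 x) (h.wpos x).le)
      nlinarith

lemma KmW.Y' (h : KmW f w l α) (t : G) :
    ∑ x, w x * (f (x + t) * w (x + t)) = ∑ x, f x * w x * w (x + (-t)) := by
  rw [← Equiv.sum_comp (Equiv.addRight t) (fun x => f x * w x * w (x + (-t)))]
  refine Finset.sum_congr rfl fun x _ => ?_
  simp only [Equiv.coe_addRight, add_neg_cancel_right]; ring

lemma KmW.ac_expand (h : KmW f w l α) (t : G) :
    kmAc (fun x => (f x - α) * w x) t = kmAc (fun x => f x * w x) t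
      - α * (∑ x, f x * w x * w (x + t) + ∑ x, f x * w x * w (x + (-t)))
      + α ^ 2 * ∑ x, w x * w (x + t) := by
  rw [← h.Y', ← Finset.sum_add_distrib, Finset.mul_sum, Finset.mul_sum]
  unfold kmAc
  rw [← Finset.sum_sub_distrib, ← Finset.sum_add_distrib]
  exact Finset.sum_congr rfl fun x _ => by ring

lemma KmW.ac_abs (h : KmW f w l α) (t : G) :
    |α ^ 2 + kmAc (fun x => (f x - α) * w x) t| ≤
      kmAc (fun x => f x * w x) t + 3 * α ^ 2 * (Real.exp (l t) - 1) := by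
  have hα := h.αpos
  have h0 : 0 ≤ kmAc (fun x => f x * w x) t := Finset.sum_nonneg fun x _ => by
    have := h.f0 x; have := h.f0 (x + t); have := h.wpos x; have := h.wpos (x + t); positivity
  rw [h.ac_expand]
  have a1 := h.Y_le t
  have a2 := h.Y_ge t
  have a3 := h.Y_le (-t)
  have a4 := h.Y_ge (-t)
  rw [h.lsym] at a3 a4
  have a5 := h.V_le t
  have a6 := h.V_ge t
  set Y := ∑ x, f x * w x * w (x + t)
  set Y2 := ∑ x, f x * w x * w (x + (-t))
  set V := ∑ x, w x * w (x + t)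
  set K := kmAc (fun x => f x * w x) t
  set E := Real.exp (l t)
  set E' := Real.exp (-l t)
  have hE : E * E' = 1 := by rw [← Real.exp_add]; simp
  have hE1 : 1 ≤ E := Real.one_le_exp (h.l0 t)
  have hE2 : 0 < E' := Real.exp_pos _
  have hEE : 2 - E ≤ E' := by nlinarith [sq_nonneg (E - 1)]
  have b1 : α * (Y + Y2) ≤ α * (2 * E * α) := by gcongr; linarith
  have b2 : α * (2 * E' * α) ≤ α * (Y + Y2) := by gcongr; linarith
  have b3 : α ^ 2 * V ≤ α ^ 2 := by nlinarith [sq_nonneg α]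
  have b4 : α ^ 2 * E' ≤ α ^ 2 * V := by gcongr
  have hα2 : 0 < α ^ 2 := by positivity
  have b5 : α ^ 2 * (2 - E) ≤ α ^ 2 * E' := by gcongr
  have b6 : 0 ≤ α ^ 2 * (E - 1) := mul_nonneg hα2.le (by linarith)
  rw [abs_le]
  constructor <;> nlinarith

lemma KmW.cv_le (h : KmW f w l α) (t : G) :
    kmCv (fun x => (f x - α) * w x) t ≤ kmCv (fun x => f x * w x) t - α ^ 2 * (1 - 2 * l t) := by
  have e : kmCv (fun x => (f x - α) * w x) t = kmCv (fun x => f x * w x) t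
      - α * (∑ x, f x * w x * w (t - x) + ∑ x, w x * (f (t - x) * w (t - x)))
      + α ^ 2 * ∑ x, w x * w (t - x) := by
    rw [← Finset.sum_add_distrib, Finset.mul_sum, Finset.mul_sum]
    unfold kmCv
    rw [← Finset.sum_sub_distrib, ← Finset.sum_add_distrib]
    exact Finset.sum_congr rfl fun x _ => by ring
  have e2 : ∑ x, w x * (f (t - x) * w (t - x)) = ∑ x, f x * w x * w (t - x) := by
    rw [← Equiv.sum_comp (Equiv.subLeft t)]
    refine Finset.sum_congr rfl fun x _ => ?_
    simp only [Equiv.subLeft_apply, sub_sub_cancel]; ring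
  have e3 : ∀ x, w (t - x) = w (x + (-t)) := fun x => by
    rw [← h.wsym]; congr 1; abel
  rw [e, e2]
  simp_rw [e3]
  have a4 := h.Y_ge (-t)
  have a5 := h.V_le (-t)
  rw [h.lsym] at a4
  have a6 : 1 - l t ≤ Real.exp (-l t) := by have := Real.add_one_le_exp (-l t); linarith
  have hα := h.αpos
  have b3 : α ^ 2 * ∑ x, w x * w (x + (-t)) ≤ α ^ 2 := by nlinarith [sq_nonneg α]
  have b4 : α * (Real.exp (-l t) * α) ≤ α * ∑ x, f x * w x * w (x + (-t)) := by gcongr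
  have b5 : α ^ 2 * (1 - l t) ≤ α ^ 2 * Real.exp (-l t) := by gcongr
  nlinarith

/-- unbalanced moment of `1_A w` -/
lemma KmW.moment (h : KmW f w l α) (η : G → ℝ) (hη : ∀ u, 0 ≤ η u) (p : ℕ) (hp : Even p)
    (hp20 : 20 ≤ p)
    (hE : ∑ u, ∑ v, η u * η v * Real.exp (120 * (8 * p : ℕ) * l (u - v)) ≤ 2)
    (hg : (α ^ 2 / 4) ^ p ≤ ∑ u, ∑ v, η u * η v * (kmAc (fun x => (f x - α) * w x) (u - v)) ^ p) :
    (1.03 * α ^ 2) ^ (8 * p) ≤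
      ∑ u, ∑ v, η u * η v * (kmAc (fun x => f x * w x) (u - v)) ^ (8 * p) := by
  have hα := h.αpos
  have hα2 : 0 < α ^ 2 := by positivity
  have h1 := km_unbalance η (fun x => (f x - α) * w x) p (α ^ 2) hα2 hg
  set P := 8 * p with hP
  have hPe : Even P := by rw [hP]; exact hp.mul_left 8
  have pt : ∀ t, (α ^ 2 + kmAc (fun x => (f x - α) * w x) t) ^ P ≤
      (20 / 19) ^ P * (kmAc (fun x => f x * w x) t) ^ P
        + (α ^ 2 / 2) ^ P * Real.exp (120 * P * l t) := by
    intro t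
    have h0 : 0 ≤ kmAc (fun x => f x * w x) t := Finset.sum_nonneg fun x _ => by
      have := h.f0 x; have := h.f0 (x + t); have := h.wpos x; have := h.wpos (x + t); positivity
    rw [← hPe.pow_abs]
    have hab := h.ac_abs t
    set K := kmAc (fun x => f x * w x) t
    set e := 3 * α ^ 2 * (Real.exp (l t) - 1) with he
    have he0 : 0 ≤ e := by
      have := Real.one_le_exp (h.l0 t); rw [he]; exact mul_nonneg (by positivity) (by linarith)
    have h20 : 20 * e ≤ α ^ 2 / 2 * Real.exp (120 * l t) := by
      have : 1 + (120:ℕ) * (Real.exp (l t) - 1) ≤ (1 + (Real.exp (l t) - 1)) ^ 120 :=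
        one_add_mul_le_pow (by have := Real.exp_pos (l t); linarith) 120
      rw [add_sub_cancel, ← Real.exp_nat_mul] at this
      push_cast at this
      rw [he]; nlinarith
    have hcase : (K + e) ^ P ≤ (20 / 19 * K) ^ P + (20 * e) ^ P := by
      rcases le_total (19 * e) K with hc | hc
      · have : (K + e) ^ P ≤ (20 / 19 * K) ^ P := pow_le_pow_left₀ (by positivity) (by linarith) _
        have h3 : 0 ≤ (20 * e) ^ P := by positivity
        linarith
      · have : (K + e) ^ P ≤ (20 * e) ^ P := pow_le_pow_left₀ (by positivity) (by linarith) _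
        have h3 : 0 ≤ (20 / 19 * K) ^ P := by positivity
        linarith
    have h21 : (20 * e) ^ P ≤ (α ^ 2 / 2) ^ P * Real.exp (120 * P * l t) := by
      refine (pow_le_pow_left₀ (by positivity) h20 P).trans (le_of_eq ?_)
      rw [mul_pow, ← Real.exp_nat_mul]; congr 2; ring
    calc |α ^ 2 + kmAc (fun x => (f x - α) * w x) t| ^ P ≤ (K + e) ^ P :=
          pow_le_pow_left₀ (abs_nonneg _) hab _
      _ ≤ _ := hcase
      _ ≤ _ := by rw [mul_pow]; linarith
  have h2 : ∑ u, ∑ v, η u * η v * (α ^ 2 + kmAc (fun x => (f x - α) * w x) (u - v)) ^ P ≤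
      (20 / 19) ^ P * ∑ u, ∑ v, η u * η v * (kmAc (fun x => f x * w x) (u - v)) ^ P
      + (α ^ 2 / 2) ^ P * ∑ u, ∑ v, η u * η v * Real.exp (120 * P * l (u - v)) := by
    simp_rw [Finset.mul_sum, ← Finset.sum_add_distrib]
    refine Finset.sum_le_sum fun u _ => Finset.sum_le_sum fun v _ => ?_
    have := mul_le_mul_of_nonneg_left (pt (u - v)) (mul_nonneg (hη u) (hη v))
    linarith
  have h3 := h1.trans h2
  set Sg := ∑ u, ∑ v, η u * η v * (kmAc (fun x => f x * w x) (u - v)) ^ P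
  have h4 : (α ^ 2 / 2) ^ P * ∑ u, ∑ v, η u * η v * Real.exp (120 * P * l (u - v)) ≤
      (α ^ 2 / 2) ^ P * 2 := by gcongr
  have h5 : (α ^ 2 / 2) ^ P * 2 ≤ (α ^ 2) ^ P := by
    rw [div_pow, div_mul_eq_mul_div, div_le_iff₀ (by positivity)]
    have : (2:ℝ) ≤ 2 ^ P := by
      calc (2:ℝ) = 2 ^ 1 := by norm_num
        _ ≤ 2 ^ P := pow_le_pow_right₀ (by norm_num) (by omega)
    have h6 : 0 < (α ^ 2) ^ P := by positivity
    nlinarith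
  have h6 : (1.91 : ℝ) ^ p + 1 ≤ 2 ^ p := by
    have e1 : (1.91 / 2 : ℝ) ^ p ≤ (1.91 / 2) ^ 20 :=
      pow_le_pow_of_le_one (by norm_num) (by norm_num) hp20
    have e2 : (1.91 / 2 : ℝ) ^ 20 ≤ 1 / 2 := by norm_num
    have e3 := e1.trans e2
    rw [div_pow, div_le_iff₀ (by positivity)] at e3
    have : (2:ℝ) ≤ 2 ^ p := by
      calc (2:ℝ) = 2 ^ 1 := by norm_num
        _ ≤ 2 ^ p := pow_le_pow_right₀ (by norm_num) (by omega)
    linarith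
  have h7 : ((20 / 19 : ℝ) * 1.03) ^ P ≤ 1.91 ^ p := by
    rw [hP, pow_mul]; exact pow_le_pow_left₀ (by positivity) (by norm_num) _
  have h8 : 0 < (α ^ 2) ^ P := by positivity
  have h9 : (20 / 19 : ℝ) ^ P * ((1.03 * α ^ 2) ^ P) ≤ (20 / 19) ^ P * Sg := by
    rw [mul_pow, ← mul_assoc, ← mul_pow]
    nlinarith
  have h10 : (0:ℝ) < (20 / 19) ^ P := by positivity
  nlinarith

end KM2

open Finset
set_option linter.unusedSectionVars false
set_option linter.unusedVariables false

section KM3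
variable {G : Type*} [AddCommGroup G] [Fintype G]
variable {f w l : G → ℝ} {α : ℝ}

/-- From no three term progressions to a large moment. -/
lemma KmW.threeAP (h : KmW f w l α) (η : G → ℝ) (hη : ∀ u, 0 ≤ η u) (p : ℕ) (hp : Even p)
    (H : G → G) (hH : ∀ t, H t + H t = t) (hinj : ∀ x y : G, x + x = y + y → x = y)
    (h3 : ∀ x y z, f x = 1 → f y = 1 → f z = 1 → x + z = y + y → x = z)
    (β : ℝ) (hβ : ∑ u, ∑ v, η u * η v * f (H (u - v)) = β) (hβp : (1 / 2) ^ p ≤ β)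
    (hW : ∀ x, w x ^ 2 ≤ α ^ 2 / 4) (hl : ∑ u, ∑ v, η u * η v * l (u - v) ≤ β / 8) :
    (α ^ 2 / 4) ^ p ≤ ∑ u, ∑ v, η u * η v * (kmAc (fun x => (f x - α) * w x) (u - v)) ^ p := by
  classical
  have hα := h.αpos
  have hβ0 : 0 < β := lt_of_lt_of_le (by positivity) hβp
  have cva : ∀ t, f (H t) = 1 → kmCv (fun x => f x * w x) t ≤ α ^ 2 / 4 := by
    intro t ht
    have : kmCv (fun x => f x * w x) t = (f (H t) * w (H t)) * (f (t - H t) * w (t - H t)) := by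
      unfold kmCv
      refine Finset.sum_eq_single (H t) ?_ (by simp)
      intro x _ hx
      rcases h.f01 x with h0 | h0
      · simp [h0]
      rcases h.f01 (t - x) with h1 | h1
      · simp [h1]
      exfalso
      have := h3 x (H t) (t - x) h0 ht h1 (by rw [hH]; abel)
      apply hx; apply hinj; rw [hH]; nth_rw 2 [this]; abel
    rw [this, show t - H t = H t by nth_rw 1 [← hH t]; abel, ht]
    have := hW (H t); nlinarith
  have hb : ∑ i : G × G, (η i.1 * η i.2) * f (H (i.1 - i.2)) = β := by
    rw [← hβ, Fintype.sum_prod_type]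
  have hcv : ∑ i : G × G, (η i.1 * η i.2) * f (H (i.1 - i.2)) *
      kmCv (fun x => (f x - α) * w x) (i.1 - i.2) ≤ -(α ^ 2 / 2 * β) := by
    have pt : ∀ i : G × G, (η i.1 * η i.2) * f (H (i.1 - i.2)) *
      kmCv (fun x => (f x - α) * w x) (i.1 - i.2) ≤
      -(3 * α ^ 2 / 4) * ((η i.1 * η i.2) * f (H (i.1 - i.2)))
        + 2 * α ^ 2 * (η i.1 * η i.2 * l (i.1 - i.2)) := by
      intro i
      have e := mul_nonneg (hη i.1) (hη i.2)
      have hl0 := h.l0 (i.1 - i.2)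
      rcases h.f01 (H (i.1 - i.2)) with h0 | h0
      · rw [h0]; simp; positivity
      · have c1 := h.cv_le (i.1 - i.2)
        have c2 := cva _ h0
        rw [h0]
        have : kmCv (fun x => (f x - α) * w x) (i.1 - i.2) ≤
          -(3 * α ^ 2 / 4) + 2 * α ^ 2 * l (i.1 - i.2) := by linarith
        have := mul_le_mul_of_nonneg_left this e
        linarith
    refine (Finset.sum_le_sum fun i _ => pt i).trans ?_
    rw [Finset.sum_add_distrib, ← Finset.mul_sum, ← Finset.mul_sum, hb, Fintype.sum_prod_type]
    have : 2 * α ^ 2 * ∑ u, ∑ v, η u * η v * l (u - v) ≤ 2 * α ^ 2 * (β / 8) := by gcongr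
    linarith
  have := km_holder (Finset.univ) (fun i : G × G => η i.1 * η i.2) (fun i => f (H (i.1 - i.2)))
    (fun i => kmCv (fun x => (f x - α) * w x) (i.1 - i.2)) (fun i => mul_nonneg (hη _) (hη _))
    (fun i => h.f0 _) (fun i => h.f1 _) p hp (α ^ 2 / 2) β (by positivity) hβ0 hb hcv
  rw [Fintype.sum_prod_type] at this
  refine le_trans ?_ (this.trans (km_decouple η _ p))
  calc (α ^ 2 / 4) ^ p = (1 / 2) ^ p * (α ^ 2 / 2) ^ p := by rw [← mul_pow]; congr 1; ring
    _ ≤ _ := by gcongr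

/-- Sifting. -/
lemma KmW.sift (h : KmW f w l α) (η : G → ℝ) (hη : ∀ u, 0 ≤ η u) (hη1 : ∑ u, η u = 1)
    (P : ℕ) (hP : 1000 ≤ P) (κ : ℝ) (hκ : 0 < κ) (hκ2 : κ ≤ (1.03 * α ^ 2) ^ P / 4)
    (hm : (1.03 * α ^ 2) ^ P ≤ ∑ u, ∑ v, η u * η v * (kmAc (fun x => f x * w x) (u - v)) ^ P) :
    ∃ φ : G → ℝ, (∀ s, 0 ≤ φ s) ∧ ∑ s, φ s = 1 ∧
      (∀ s, φ s ≤ κ⁻¹ * (η s * Real.exp (P * l s))) ∧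
      ∑ u, ∑ v, φ u * φ v * (if kmAc (fun x => f x * w x) (u - v) ≤ 1.02 * α ^ 2 then 1 else 0)
        ≤ 1 / 1000 := by
  classical
  have hα := h.αpos
  set a : G → ℝ := fun x => f x * w x with ha
  have ha0 : ∀ x, 0 ≤ a x := fun x => mul_nonneg (h.f0 x) (h.wpos x).le
  have haw : ∀ x, a x ≤ w x := fun x => by
    have := h.f1 x; have := h.wpos x; simp only [ha]; nlinarith
  set Y : G → G → ℝ := fun u v => if kmAc a (u - v) ≤ 1.02 * α ^ 2 then 1 else 0 with hY
  set m : (Fin P → G) → ℝ := fun x => ∑ u, η u * ∏ i, a (x i + u) with hmdef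
  set W : (Fin P → G) → ℝ := fun x => ∏ i, w (x i) with hWdef
  set bad : (Fin P → G) → ℝ := fun x => ∑ u, ∑ v, (η u * ∏ i, a (x i + u)) *
    (η v * ∏ i, a (x i + v)) * Y u v with hbad
  have hm0 : ∀ x, 0 ≤ m x := fun x => Finset.sum_nonneg fun u _ =>
    mul_nonneg (hη u) (Finset.prod_nonneg fun i _ => ha0 _)
  have hWp : ∀ x, 0 < W x := fun x => Finset.prod_pos fun i _ => h.wpos _
  have hac0 : ∀ t, 0 ≤ kmAc a t := fun t => Finset.sum_nonneg fun x _ => mul_nonneg (ha0 _) (ha0 _)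
  set Θ := ∑ x, m x ^ 2 with hΘ
  have hΘ1 : (1.03 * α ^ 2) ^ P ≤ Θ := by rw [hΘ]; rw [km_ac_pow] at hm; exact hm
  have hΘ0 : 0 < Θ := lt_of_lt_of_le (by positivity) hΘ1
  -- total bad
  have hbt : ∑ x, bad x ≤ Θ / 4000 := by
    have e := km_expand η (fun x u => a (x + u)) (fun x u => a (x + u)) P
      (fun u v => kmAc a (u - v)) (fun u v => kmAc_sub a u v) Y
    have : ∑ x, bad x ≤ (1.02 * α ^ 2) ^ P := by
      rw [hbad]; simp only []
      rw [← e]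
      calc _ ≤ ∑ u, ∑ v, η u * η v * (1.02 * α ^ 2) ^ P := by
            refine Finset.sum_le_sum fun u _ => Finset.sum_le_sum fun v _ => ?_
            have e := mul_nonneg (hη u) (hη v)
            simp only [hY]
            split_ifs with hc
            · rw [mul_one]
              exact mul_le_mul_of_nonneg_left (pow_le_pow_left₀ (hac0 _) hc _) e
            · rw [mul_zero]; positivity
        _ = _ := by
            simp_rw [← Finset.sum_mul, ← Finset.mul_sum, hη1]; simp [hη1]
    refine this.trans ?_
    have e1 : (102 / 103 : ℝ) ^ P ≤ 1 / 4000 := by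
      calc (102 / 103 : ℝ) ^ P ≤ (102 / 103) ^ 1000 :=
            pow_le_pow_of_le_one (by norm_num) (by norm_num) hP
        _ = ((102 / 103) ^ 100) ^ 10 := by rw [← pow_mul]
        _ ≤ (0.4) ^ 10 := pow_le_pow_left₀ (by positivity) (by norm_num) _
        _ ≤ _ := by norm_num
    calc (1.02 * α ^ 2) ^ P = (102 / 103 : ℝ) ^ P * (1.03 * α ^ 2) ^ P := by
          rw [← mul_pow]; congr 1; ring
      _ ≤ 1 / 4000 * Θ := by gcongr
      _ = _ := by ring
  -- small mass
  have hWm : ∑ x, W x * m x ≤ 1 := by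
    have : ∑ x, W x * m x = ∑ u, η u * (∑ x, w x * a (x + u)) ^ P := by
      simp_rw [Fintype.sum_pow, Finset.mul_sum, hmdef, Finset.mul_sum]
      rw [Finset.sum_comm]
      refine Finset.sum_congr rfl fun u _ => Finset.sum_congr rfl fun x _ => ?_
      have e : ∏ i, w (x i) * a (x i + u) = W x * ∏ i, a (x i + u) := Finset.prod_mul_distrib
      rw [e]; ring
    rw [this, ← hη1]
    refine Finset.sum_le_sum fun u _ => ?_
    have h1 : ∑ x, w x * a (x + u) ≤ 1 := (Finset.sum_le_sum fun x _ =>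
      mul_le_mul_of_nonneg_left (haw _) (h.wpos x).le).trans (h.V_le u)
    have h2 : (∑ x, w x * a (x + u)) ^ P ≤ 1 := pow_le_one₀
      (Finset.sum_nonneg fun x _ => mul_nonneg (h.wpos x).le (ha0 _)) h1
    have := hη u
    nlinarith
  obtain ⟨x, hx1, hx2⟩ : ∃ x, κ * W x ≤ m x ∧ bad x ≤ m x ^ 2 / 1000 := by
    by_contra hcon
    push Not at hcon
    have pt : ∀ x, m x ^ 2 ≤ κ * (W x * m x) + 1000 * bad x := by
      intro x
      have hb0 : 0 ≤ bad x := by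
        refine Finset.sum_nonneg fun u _ => Finset.sum_nonneg fun v _ => ?_
        refine mul_nonneg (mul_nonneg (mul_nonneg (hη u) ?_) (mul_nonneg (hη v) ?_)) ?_
        · exact Finset.prod_nonneg fun i _ => ha0 _
        · exact Finset.prod_nonneg fun i _ => ha0 _
        · simp only [hY]; split_ifs <;> norm_num
      by_cases hc : κ * W x ≤ m x
      · have := hcon x hc
        have e : 0 ≤ κ * (W x * m x) := by have := hWp x; have := hm0 x; positivity
        linarith
      · push Not at hc
        have := hm0 x
        nlinarith
    have := Finset.sum_le_sum fun x (_ : x ∈ (univ : Finset (Fin P → G))) => pt x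
    rw [Finset.sum_add_distrib, ← Finset.mul_sum, ← Finset.mul_sum] at this
    have e2 : κ * ∑ x, W x * m x ≤ κ * 1 := by gcongr
    nlinarith
  have hmx : 0 < m x := lt_of_lt_of_le (mul_pos hκ (hWp x)) hx1
  refine ⟨fun s => η s * (∏ i, a (x i + s)) / m x, ?_, ?_, ?_, ?_⟩
  · intro s
    exact div_nonneg (mul_nonneg (hη s) (Finset.prod_nonneg fun i _ => ha0 _)) hmx.le
  · rw [← Finset.sum_div]; exact div_self hmx.ne'
  · intro s
    have hle : ∏ i, a (x i + s) ≤ W x * Real.exp (P * l s) := by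
      calc ∏ i, a (x i + s) ≤ ∏ i, (Real.exp (l s) * w (x i)) :=
            Finset.prod_le_prod (fun i _ => ha0 _) fun i _ => (haw _).trans (h.wl _ _)
        _ = _ := by
            rw [Finset.prod_mul_distrib, Finset.prod_const, ← Real.exp_nat_mul]; simp [hWdef, mul_comm]
    rw [div_le_iff₀ hmx]
    calc η s * ∏ i, a (x i + s) ≤ η s * (W x * Real.exp (P * l s)) :=
          mul_le_mul_of_nonneg_left hle (hη s)
      _ = κ⁻¹ * (η s * Real.exp (P * l s)) * (κ * W x) := by field_simp
      _ ≤ _ := mul_le_mul_of_nonneg_left hx1 (mul_nonneg (by positivity) (mul_nonneg (hη s) (Real.exp_pos _).le))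
  · have : ∑ u, ∑ v, (η u * (∏ i, a (x i + u)) / m x) * (η v * (∏ i, a (x i + v)) / m x) * Y u v
        = bad x / m x ^ 2 := by
      rw [hbad]; simp only [Finset.sum_div]
      refine Finset.sum_congr rfl fun u _ => Finset.sum_congr rfl fun v _ => ?_
      field_simp
    rw [this, div_le_iff₀ (by positivity)]
    linarith
end KM3

open Finset
set_option linter.unusedSectionVars false
set_option linter.unusedVariables false

section KM4
variable {G : Type*} [AddCommGroup G] [Fintype G]

lemma km_hoeff (φ X : G → ℝ) (hφ : ∀ s, 0 ≤ φ s) (hφ1 : ∑ s, φ s = 1) (hX : ∀ s, |X s| ≤ 1)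
    (hm : ∑ s, φ s * X s = 0) (ε : ℝ) (h0 : 0 ≤ ε) (h1 : ε ≤ 1) (k : ℕ) :
    ∑ s : Fin k → G, (∏ i, φ (s i)) * (if k * ε < ∑ i, X (s i) then 1 else 0)
      ≤ Real.exp (-(k * ε ^ 2 / 4)) := by
  set θ := ε / 2 with hθ
  have hθ0 : 0 ≤ θ := by positivity
  have hθ1 : θ ≤ 1 := by linarith
  have mgf : ∑ s, φ s * Real.exp (θ * X s) ≤ Real.exp (θ ^ 2) := by
    calc ∑ s, φ s * Real.exp (θ * X s) ≤ ∑ s, φ s * (1 + θ * X s + θ ^ 2) := by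
          refine Finset.sum_le_sum fun s _ => mul_le_mul_of_nonneg_left ?_ (hφ s)
          have hx : |θ * X s| ≤ 1 := by
            rw [abs_mul, abs_of_nonneg hθ0]; have := hX s; have := abs_nonneg (X s); nlinarith
          have e := (abs_le.1 (Real.abs_exp_sub_one_sub_id_le hx)).2
          have e2 : (θ * X s) ^ 2 ≤ θ ^ 2 := by
            rw [mul_pow]
            have : X s ^ 2 ≤ 1 := (sq_le_one_iff_abs_le_one _).2 (hX s)
            have := sq_nonneg θ; nlinarith
          linarith
      _ = (∑ s, φ s) + θ * (∑ s, φ s * X s) + θ ^ 2 * ∑ s, φ s := by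
          rw [Finset.mul_sum, Finset.mul_sum, ← Finset.sum_add_distrib, ← Finset.sum_add_distrib]
          exact Finset.sum_congr rfl fun s _ => by ring
      _ = 1 + θ ^ 2 := by rw [hφ1, hm]; ring
      _ ≤ _ := by have := Real.add_one_le_exp (θ ^ 2); linarith
  have mgf0 : 0 ≤ ∑ s, φ s * Real.exp (θ * X s) :=
    Finset.sum_nonneg fun s _ => mul_nonneg (hφ s) (Real.exp_pos _).le
  calc _ ≤ ∑ s : Fin k → G, (∏ i, φ (s i) * Real.exp (θ * X (s i))) * Real.exp (-(θ * (k * ε))) := by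
        refine Finset.sum_le_sum fun s _ => ?_
        rw [Finset.prod_mul_distrib, mul_assoc, ← Real.exp_sum, ← Real.exp_add]
        refine mul_le_mul_of_nonneg_left ?_ (Finset.prod_nonneg fun i _ => hφ _)
        split_ifs with hc
        · apply Real.one_le_exp
          rw [← Finset.mul_sum]; nlinarith
        · exact (Real.exp_pos _).le
    _ = (∑ s, φ s * Real.exp (θ * X s)) ^ k * Real.exp (-(θ * (k * ε))) := by
        rw [← Finset.sum_mul, Fintype.sum_pow]
    _ ≤ Real.exp (θ ^ 2) ^ k * Real.exp (-(θ * (k * ε))) := by gcongr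
    _ = _ := by
        rw [← Real.exp_nat_mul, ← Real.exp_add]; congr 1; rw [hθ]; ring

lemma km_hoeff2 (φ X : G → ℝ) (hφ : ∀ s, 0 ≤ φ s) (hφ1 : ∑ s, φ s = 1) (hX : ∀ s, |X s| ≤ 1)
    (hm : ∑ s, φ s * X s = 0) (ε : ℝ) (h0 : 0 ≤ ε) (h1 : ε ≤ 1) (k : ℕ) :
    ∑ s : Fin k → G, (∏ i, φ (s i)) * (if k * ε < |∑ i, X (s i)| then 1 else 0)
      ≤ 2 * Real.exp (-(k * ε ^ 2 / 4)) := by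
  have a1 := km_hoeff φ X hφ hφ1 hX hm ε h0 h1 k
  have a2 := km_hoeff φ (fun s => - X s) hφ hφ1 (fun s => by rw [abs_neg]; exact hX s)
    (by simp [hm]) ε h0 h1 k
  have := add_le_add a1 a2
  rw [← Finset.sum_add_distrib, ← two_mul] at this
  refine le_trans (Finset.sum_le_sum fun s _ => ?_) this
  rw [← mul_add]
  refine mul_le_mul_of_nonneg_left ?_ (Finset.prod_nonneg fun i _ => hφ _)
  rw [Finset.sum_neg_distrib]
  split_ifs with c1 c2 c3 c3 c2 c3 c3 <;> norm_num
  rcases lt_abs.1 c1 with h | h <;> contradiction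

def kmJ (T : Set G) : ℕ → G → Prop
  | 0, z => z = 0
  | j + 1, z => ∃ z' t t', kmJ T j z' ∧ t ∈ T ∧ t' ∈ T ∧ z = z' + t - t'

structure KmLen (h : G → ℝ) : Prop where
  nn : ∀ x, 0 ≤ h x
  zero : h 0 = 0
  sym : ∀ x, h (-x) = h x
  add : ∀ x y, h (x + y) ≤ h x + h y

lemma KmLen.sub {h : G → ℝ} (H : KmLen h) (x y : G) : h (x - y) ≤ h x + h y := by
  rw [sub_eq_add_neg, ← H.sym y]; exact H.add _ _

lemma kmJ_len {h : G → ℝ} (H : KmLen h) (T : Set G) (c : ℝ) (hT : ∀ t ∈ T, h t ≤ c) (j : ℕ) (z : G)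
    (hz : kmJ T j z) : h z ≤ 2 * j * c := by
  induction j generalizing z with
  | zero => simp only [kmJ] at hz; rw [hz, H.zero]; simp
  | succ j ih =>
    obtain ⟨z', t, t', h1, h2, h3, rfl⟩ := hz
    have := ih z' h1
    have a := H.sub (z' + t) t'
    have b := H.add z' t
    have := hT t h2
    have := hT t' h3
    push_cast; linarith

lemma km_almost (φ ω h Y μ : G → ℝ) (H : KmLen h) (hφ : ∀ s, 0 ≤ φ s) (hφ1 : ∑ s, φ s = 1)
    (hω : ∀ s, 0 ≤ ω s) (hω2 : ∑ s, ω s ≤ 2) (κ : ℝ) (hκ : 0 < κ) (hφω : ∀ s, φ s ≤ κ⁻¹ * ω s)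
    (hωh : ∀ x t, ω (x + t) ≤ Real.exp (h t) * ω x) (hY0 : ∀ t, 0 ≤ Y t) (hY1 : ∀ t, Y t ≤ 1)
    (hμ : ∀ t, 0 ≤ μ t) (hμ1 : ∑ t, μ t = 1) (m : ℕ) (hm : 0 < m) (k : ℕ) (hk : 0 < k) (ε : ℝ) (h0 : 0 < ε)
    (h1 : 8 * m * ε ≤ 1 / 1000) (hε : Real.exp (-(k * ε ^ 2 / 4)) ≤ κ * ε / 8)
    (τ : ℝ) (hτ : τ = (κ / 2) ^ k / 8)
    (htail : ∑ t, μ t * Real.exp (k * h t) * (if 1 < 2 * m * h t then 1 else 0) ≤ τ) :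
    ∃ T : Set G, τ ≤ ∑ t, μ t * Real.exp (k * h t) * T.indicator 1 t ∧
      ∀ z, kmJ T m z → (∑ u, ∑ v, φ u * φ v * Y (u - v)) - 1 / 1000 ≤
        ∑ u, ∑ v, φ u * φ v * Y (u - v + z) := by
  set F : G → ℝ := fun x => ∑ s, φ s * Y (s - x) with hF
  have hF0 : ∀ x, 0 ≤ F x := fun x => Finset.sum_nonneg fun s _ => mul_nonneg (hφ s) (hY0 _)
  have hF1 : ∀ x, F x ≤ 1 := fun x => by
    rw [← hφ1]; exact Finset.sum_le_sum fun s _ => by have := hY1 (s - x); have := hφ s; nlinarith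
  have hε1 : ε ≤ 1 := by
    have : (1:ℝ) ≤ m := by exact_mod_cast hm
    nlinarith
  have hk0 : (0:ℝ) < k := by exact_mod_cast hk
  -- sample
  set D : (Fin k → G) → G → ℝ := fun s x => if k * ε < |∑ i, (Y (s i - x) - F x)| then 1 else 0 with hD
  have hD0 : ∀ s x, 0 ≤ D s x := fun s x => by simp only [hD]; split_ifs <;> norm_num
  set B : (Fin k → G) → ℝ := fun s => ∑ x, ω x * D s x with hB
  have hB0 : ∀ s, 0 ≤ B s := fun s => Finset.sum_nonneg fun x _ => mul_nonneg (hω x) (hD0 _ _)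
  have hBsum : ∑ s : Fin k → G, (∏ i, φ (s i)) * B s ≤ κ * ε / 2 := by
    simp_rw [hB, Finset.mul_sum]
    rw [Finset.sum_comm]
    calc _ ≤ ∑ x, ω x * (2 * Real.exp (-(k * ε ^ 2 / 4))) := by
          refine Finset.sum_le_sum fun x _ => ?_
          have := km_hoeff2 φ (fun s => Y (s - x) - F x) hφ hφ1
            (fun s => by
              rw [abs_le]; have := hF0 x; have := hF1 x; have := hY0 (s - x); have := hY1 (s - x)
              constructor <;> linarith)
            (by simp_rw [mul_sub, Finset.sum_sub_distrib, ← Finset.sum_mul, hφ1]; simp [hF]) ε h0.le hε1 k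
          calc _ = ω x * ∑ s : Fin k → G, (∏ i, φ (s i)) * D s x := by
                rw [Finset.mul_sum]; exact Finset.sum_congr rfl fun s _ => by ring
            _ ≤ _ := mul_le_mul_of_nonneg_left this (hω x)
      _ = (∑ x, ω x) * (2 * Real.exp (-(k * ε ^ 2 / 4))) := by rw [Finset.sum_mul]
      _ ≤ 2 * (2 * (κ * ε / 8)) := by gcongr
      _ = _ := by ring
  have hsum1 : ∑ s : Fin k → G, ∏ i, φ (s i) = 1 := by rw [← Fintype.sum_pow, hφ1, one_pow]
  have hQ : 1 / 2 ≤ ∑ s : Fin k → G, (∏ i, φ (s i)) * (if B s ≤ κ * ε then 1 else 0) := by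
    have : ∀ s : Fin k → G, (∏ i, φ (s i)) - (κ * ε)⁻¹ * ((∏ i, φ (s i)) * B s) ≤
        (∏ i, φ (s i)) * (if B s ≤ κ * ε then 1 else 0) := by
      intro s
      have e : 0 ≤ ∏ i, φ (s i) := Finset.prod_nonneg fun i _ => hφ _
      have e2 : 0 < κ * ε := by positivity
      split_ifs with hc
      · have := hB0 s
        have : 0 ≤ (κ * ε)⁻¹ * ((∏ i, φ (s i)) * B s) := by positivity
        linarith
      · push Not at hc
        have : 1 ≤ (κ * ε)⁻¹ * B s := by rw [← div_eq_inv_mul, le_div_iff₀ e2]; linarith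
        nlinarith
    have := Finset.sum_le_sum fun s (_ : s ∈ (univ : Finset (Fin k → G))) => this s
    rw [Finset.sum_sub_distrib, ← Finset.mul_sum, hsum1] at this
    refine le_trans ?_ this
    have e2 : 0 < κ * ε := by positivity
    have : (κ * ε)⁻¹ * ∑ s : Fin k → G, (∏ i, φ (s i)) * B s ≤ (κ * ε)⁻¹ * (κ * ε / 2) := by gcongr
    have e3 : (κ * ε)⁻¹ * (κ * ε / 2) = 1 / 2 := by field_simp
    linarith
  -- find u
  obtain ⟨u, hu⟩ : ∃ u : Fin k → G, 2 * τ ≤ ∑ t, μ t * Real.exp (k * h t) *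
      (if B (fun i => u i + t) ≤ κ * ε then 1 else 0) := by
    by_contra hcon
    push Not at hcon
    have e1 : ∑ s : Fin k → G, (∏ i, φ (s i)) * (if B s ≤ κ * ε then 1 else 0) ≤
        ∑ u : Fin k → G, (κ⁻¹) ^ k * (∏ i, ω (u i)) * (∑ t, μ t * Real.exp (k * h t) *
      (if B (fun i => u i + t) ≤ κ * ε then 1 else 0)) := by
      calc _ = ∑ t, μ t * ∑ s : Fin k → G, (∏ i, φ (s i)) * (if B s ≤ κ * ε then 1 else 0) := by
            rw [← Finset.sum_mul, hμ1, one_mul]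
        _ = ∑ t, μ t * ∑ u : Fin k → G, (∏ i, φ (u i + t)) *
              (if B (fun i => u i + t) ≤ κ * ε then 1 else 0) := by
            refine Finset.sum_congr rfl fun t _ => ?_
            congr 1
            rw [← Equiv.sum_comp (Equiv.addRight (fun _ : Fin k => t))]
            rfl
        _ ≤ ∑ t, μ t * ∑ u : Fin k → G, ((κ⁻¹) ^ k * Real.exp (k * h t) * ∏ i, ω (u i)) *
              (if B (fun i => u i + t) ≤ κ * ε then 1 else 0) := by
            refine Finset.sum_le_sum fun t _ => mul_le_mul_of_nonneg_left ?_ (hμ t)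
            refine Finset.sum_le_sum fun u _ => mul_le_mul_of_nonneg_right ?_ (by split_ifs <;> norm_num)
            calc ∏ i, φ (u i + t) ≤ ∏ i, (κ⁻¹ * (Real.exp (h t) * ω (u i))) :=
                  Finset.prod_le_prod (fun i _ => hφ _) fun i _ => (hφω _).trans
                    (mul_le_mul_of_nonneg_left (hωh _ _) (by positivity))
              _ = _ := by
                  rw [Finset.prod_mul_distrib, Finset.prod_mul_distrib, Finset.prod_const,
                    Finset.prod_const, ← Real.exp_nat_mul]; simp; ring
        _ = _ := by
            simp_rw [Finset.mul_sum]
            rw [Finset.sum_comm]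
            refine Finset.sum_congr rfl fun u _ => Finset.sum_congr rfl fun t _ => ?_
            ring
    have e2 : ∑ u : Fin k → G, (κ⁻¹) ^ k * (∏ i, ω (u i)) * (∑ t, μ t * Real.exp (k * h t) *
      (if B (fun i => u i + t) ≤ κ * ε then 1 else 0)) ≤ ∑ u : Fin k → G, (κ⁻¹) ^ k * (∏ i, ω (u i)) * (2 * τ) := by
      refine Finset.sum_le_sum fun u _ => mul_le_mul_of_nonneg_left (hcon u).le ?_
      have : 0 ≤ ∏ i, ω (u i) := Finset.prod_nonneg fun i _ => hω _
      positivity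
    rw [← Finset.sum_mul, ← Finset.mul_sum, ← Fintype.sum_pow] at e2
    have e3 : (∑ s, ω s) ^ k ≤ 2 ^ k := pow_le_pow_left₀ (Finset.sum_nonneg fun s _ => hω s) hω2 k
    have e4 : (κ⁻¹) ^ k * (∑ s, ω s) ^ k * (2 * τ) ≤ (κ⁻¹) ^ k * 2 ^ k * (2 * τ) := by
      have : 0 ≤ τ := by rw [hτ]; positivity
      gcongr
    have e5 : (κ⁻¹) ^ k * 2 ^ k * (2 * τ) = 1 / 4 := by
      rw [hτ, div_pow, inv_pow]; field_simp; norm_num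
    linarith
  set T : Set G := {t | B (fun i => u i + t) ≤ κ * ε ∧ 2 * m * h t ≤ 1} with hT
  refine ⟨T, ?_, ?_⟩
  · have : ∑ t, μ t * Real.exp (k * h t) * (if B (fun i => u i + t) ≤ κ * ε then 1 else 0) ≤
      ∑ t, μ t * Real.exp (k * h t) * T.indicator 1 t +
      ∑ t, μ t * Real.exp (k * h t) * (if 1 < 2 * m * h t then 1 else 0) := by
      rw [← Finset.sum_add_distrib]
      refine Finset.sum_le_sum fun t _ => ?_
      rw [← mul_add]
      refine mul_le_mul_of_nonneg_left ?_ (mul_nonneg (hμ t) (Real.exp_pos _).le)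
      by_cases c1 : B (fun i => u i + t) ≤ κ * ε <;> by_cases c2 : 2 * m * h t ≤ 1
      · simp [Set.indicator, hT, c1, c2, not_lt.2 c2]
      · simp [Set.indicator, hT, c1, c2, not_le.1 c2]
      · simp [Set.indicator, hT, c1, c2, not_lt.2 c2]
      · simp [Set.indicator, hT, c1, c2, not_le.1 c2]
    have h3 := hu.trans this
    linarith
  -- shifting
  set fu : G → ℝ := fun x => (∑ i, Y (u i - x)) / k with hfu
  have hbad : ∀ t ∈ T, ∀ v, h v ≤ 1 → ∑ x, φ x * D (fun i => u i + t) (x - v) ≤ 3 * ε := by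
    intro t ht v hv
    calc _ ≤ ∑ x, κ⁻¹ * ω x * D (fun i => u i + t) (x - v) :=
          Finset.sum_le_sum fun x _ => mul_le_mul_of_nonneg_right (hφω x) (hD0 _ _)
      _ = ∑ x, κ⁻¹ * ω (x + v) * D (fun i => u i + t) x := by
          rw [← Equiv.sum_comp (Equiv.addRight v)]; simp
      _ ≤ ∑ x, κ⁻¹ * (3 * ω x) * D (fun i => u i + t) x := by
          refine Finset.sum_le_sum fun x _ => mul_le_mul_of_nonneg_right
            (mul_le_mul_of_nonneg_left ?_ (by positivity)) (hD0 _ _)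
          refine (hωh x v).trans (mul_le_mul_of_nonneg_right ?_ (hω x))
          exact (Real.exp_le_exp.2 hv).trans Real.exp_one_lt_three.le
      _ = κ⁻¹ * 3 * B (fun i => u i + t) := by
          rw [hB, Finset.mul_sum]; exact Finset.sum_congr rfl fun x _ => by ring
      _ ≤ κ⁻¹ * 3 * (κ * ε) := by gcongr; exact ht.1
      _ = _ := by field_simp
  have hD1 : ∀ t x, |F x - fu (x - t)| ≤ ε + D (fun i => u i + t) x := by
    intro t x
    have e : ∑ i, (Y (u i + t - x) - F x) = k * (fu (x - t) - F x) := by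
      rw [Finset.sum_sub_distrib, hfu]
      simp only [Finset.sum_const, Finset.card_univ, Fintype.card_fin, nsmul_eq_mul]
      rw [mul_sub, mul_div_cancel₀ _ hk0.ne']
      congr 1
      exact Finset.sum_congr rfl fun i _ => by congr 1; abel
    have hfu0 : 0 ≤ fu (x - t) := div_nonneg (Finset.sum_nonneg fun i _ => hY0 _) hk0.le
    have hfu1 : fu (x - t) ≤ 1 := by
      rw [hfu]; simp only []; rw [div_le_one hk0]
      calc _ ≤ ∑ i : Fin k, (1:ℝ) := Finset.sum_le_sum fun i _ => hY1 _
        _ = _ := by simp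
    simp only [hD]
    split_ifs with hc
    · have := hF0 x; have := hF1 x
      rw [abs_le]; constructor <;> linarith
    · rw [e, abs_mul, abs_of_pos hk0, abs_sub_comm (fu (x - t))] at hc
      rw [add_zero]; exact le_of_mul_le_mul_left (not_lt.1 hc) hk0
  have hstep : ∀ z t t', t ∈ T → t' ∈ T → h z ≤ 1 → h (z + t - t') ≤ 1 →
      ∑ x, φ x * |F (x - (z + t - t')) - F (x - z)| ≤ 8 * ε := by
    intro z t t' ht ht' hz hz'
    calc _ ≤ ∑ x, (φ x * (2 * ε) + φ x * D (fun i => u i + t') (x - (z + t - t'))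
            + φ x * D (fun i => u i + t) (x - z)) := by
          refine Finset.sum_le_sum fun x _ => ?_
          have a1 := hD1 t' (x - (z + t - t'))
          have a2 := hD1 t (x - z)
          rw [show x - (z + t - t') - t' = x - z - t by abel] at a1
          rw [← mul_add, ← mul_add]
          refine mul_le_mul_of_nonneg_left ?_ (hφ x)
          rw [abs_sub_comm] at a2
          have := abs_sub_le (F (x - (z + t - t'))) (fu (x - z - t)) (F (x - z))
          linarith
      _ ≤ 2 * ε + 3 * ε + 3 * ε := by
          rw [Finset.sum_add_distrib, Finset.sum_add_distrib, ← Finset.sum_mul, hφ1, one_mul]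
          have := hbad t' ht' _ hz'
          have := hbad t ht _ hz
          linarith
      _ = _ := by ring
  have hm0 : (0:ℝ) < m := by exact_mod_cast hm
  have hJl : ∀ j, j ≤ m → ∀ z, kmJ T j z → h z ≤ 1 := by
    intro j hj z hz
    have := kmJ_len H T (1 / (2 * m)) (fun t ht => by
      rw [le_div_iff₀ (by positivity)]; have := ht.2; linarith) j z hz
    refine this.trans ?_
    have : (j:ℝ) ≤ m := by exact_mod_cast hj
    rw [show 2 * (j:ℝ) * (1 / (2 * m)) = j / m by field_simp, div_le_one hm0]; exact this
  have hind : ∀ j, j ≤ m → ∀ z, kmJ T j z → ∑ x, φ x * |F (x - z) - F x| ≤ 8 * j * ε := by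
    intro j
    induction j with
    | zero => intro _ z hz; simp only [kmJ] at hz; simp [hz]
    | succ j ih =>
      intro hj z hz
      have hz2 := hJl _ hj z hz
      obtain ⟨z', t, t', h1, h2, h3, rfl⟩ := hz
      have b1 := ih (by omega) z' h1
      have b2 := hstep z' t t' h2 h3 (hJl j (by omega) z' h1) hz2
      calc _ ≤ ∑ x, (φ x * |F (x - (z' + t - t')) - F (x - z')| + φ x * |F (x - z') - F x|) := by
            refine Finset.sum_le_sum fun x _ => ?_
            rw [← mul_add]
            exact mul_le_mul_of_nonneg_left (abs_sub_le _ _ _) (hφ x)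
        _ ≤ _ := by rw [Finset.sum_add_distrib]; push_cast; linarith
  intro z hz
  have e1 : ∀ z, ∑ u, ∑ v, φ u * φ v * Y (u - v + z) = ∑ x, φ x * F (x - z) := by
    intro z
    rw [Finset.sum_comm]
    refine Finset.sum_congr rfl fun v _ => ?_
    rw [hF]; simp only []
    rw [Finset.mul_sum]
    refine Finset.sum_congr rfl fun u _ => ?_
    rw [show u - (v - z) = u - v + z by abel]; ring
  have e2 := e1 0
  simp only [add_zero, sub_zero] at e2
  rw [e1, e2, sub_le_comm, ← Finset.sum_sub_distrib]
  refine le_trans (Finset.sum_le_sum fun x _ => ?_) ((hind m le_rfl z hz).trans h1)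
  rw [← mul_sub]
  refine mul_le_mul_of_nonneg_left ?_ (hφ x)
  rw [abs_sub_comm]; exact le_abs_self _
end KM4

open Finset
set_option linter.unusedSectionVars false
set_option linter.unusedVariables false

section KM5
variable {G : Type*} [AddCommGroup G] [Fintype G]

noncomputable def kmF (a : G → ℝ) (γ : AddChar G ℂ) : ℂ := ∑ x, (a x : ℂ) * γ x

lemma km_parseval (a : G → ℝ) : ∑ γ : AddChar G ℂ, ‖kmF a γ‖ ^ 2 = Fintype.card G * ∑ x, a x ^ 2 := by
  classical
  have key : ((∑ γ : AddChar G ℂ, ‖kmF a γ‖ ^ 2 : ℝ) : ℂ) = ((Fintype.card G * ∑ x, a x ^ 2 : ℝ) : ℂ) := by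
    push_cast
    calc _ = ∑ γ : AddChar G ℂ, ∑ x, ∑ y, (a x : ℂ) * a y * γ (x - y) := by
          refine Finset.sum_congr rfl fun γ _ => ?_
          rw [← Complex.mul_conj', kmF, map_sum, Finset.sum_mul_sum]
          refine Finset.sum_congr rfl fun x _ => Finset.sum_congr rfl fun y _ => ?_
          rw [map_mul, Complex.conj_ofReal, ← AddChar.map_neg_eq_conj, sub_eq_add_neg, AddChar.map_add_eq_mul]
          ring
      _ = ∑ x, ∑ y, (a x : ℂ) * a y * ∑ γ : AddChar G ℂ, γ (x - y) := by
          rw [Finset.sum_comm]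
          refine Finset.sum_congr rfl fun x _ => ?_
          rw [Finset.sum_comm]
          refine Finset.sum_congr rfl fun y _ => ?_
          rw [Finset.mul_sum]
      _ = _ := by
          rw [Finset.mul_sum]
          refine Finset.sum_congr rfl fun x _ => ?_
          simp_rw [AddChar.sum_apply_eq_ite, sub_eq_zero]
          simp; ring
  exact_mod_cast key

lemma kmF_cr (φ a : G → ℝ) (γ : AddChar G ℂ) : ‖kmF (kmCr φ a) γ‖ = ‖kmF φ γ‖ * ‖kmF a γ‖ := by
  have : kmF (kmCr φ a) γ = (starRingEnd ℂ) (kmF φ γ) * kmF a γ := by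
    unfold kmF kmCr
    push_cast
    simp_rw [map_sum, Finset.sum_mul]
    rw [Finset.sum_comm]
    refine Finset.sum_congr rfl fun s _ => ?_
    rw [Finset.mul_sum, ← Equiv.sum_comp (Equiv.addRight s) (fun y => (starRingEnd ℂ) (↑(φ s) * γ s) * (↑(a y) * γ y))]
    refine Finset.sum_congr rfl fun y _ => ?_
    rw [map_mul, Complex.conj_ofReal, ← AddChar.map_neg_eq_conj]
    simp only [Equiv.coe_addRight]
    have : γ y = γ (-s) * γ (y + s) := by rw [← AddChar.map_add_eq_mul]; congr 1; abel
    rw [this]; ring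
  rw [this, norm_mul, Complex.norm_conj]

lemma kmF_le_one (φ : G → ℝ) (h0 : ∀ s, 0 ≤ φ s) (h1 : ∑ s, φ s = 1) (γ : AddChar G ℂ) : ‖kmF φ γ‖ ≤ 1 := by
  unfold kmF
  refine (norm_sum_le _ _).trans ?_
  rw [← h1]
  refine Finset.sum_le_sum fun s _ => ?_
  rw [norm_mul, AddChar.norm_apply, mul_one, Complex.norm_real, Real.norm_of_nonneg (h0 s)]

lemma kmAc_cr (ρ b : G → ℝ) (z : G) :
    kmAc (kmCr ρ b) z = ∑ u, ∑ v, ρ u * ρ v * kmAc b (u - v + z) := by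
  unfold kmAc kmCr
  simp_rw [Finset.sum_mul_sum, Finset.mul_sum]
  rw [Finset.sum_comm]
  rw [Finset.sum_comm]
  calc _ = ∑ v, ∑ u, ∑ x, ρ v * b (x + v) * (ρ u * b (x + z + u)) := by
        rw [Finset.sum_comm]
        refine Finset.sum_congr rfl fun v _ => ?_
        rw [Finset.sum_comm]
    _ = _ := by
        rw [Finset.sum_comm]
        refine Finset.sum_congr rfl fun u _ => Finset.sum_congr rfl fun v _ => ?_
        rw [← Equiv.sum_comp (Equiv.addRight v) (fun x => ρ u * ρ v * (b x * b (x + (u - v + z))))]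
        refine Finset.sum_congr rfl fun x _ => ?_
        simp only [Equiv.coe_addRight]
        rw [show x + v + (u - v + z) = x + z + u by abel]; ring

lemma km_iter (ρ : G → ℝ) (T : Set G) (h0 : ∀ s, 0 ≤ ρ s) (h1 : ∑ s, ρ s = 1) (hT : ∀ s, s ∉ T → ρ s = 0)
    (c0 : ℝ) (b : G → ℝ) (m : ℕ) (hb : ∀ z, kmJ T m z → c0 ≤ kmAc b z) :
    c0 ≤ ∑ x, ((kmCr ρ)^[m] b) x ^ 2 := by
  induction m generalizing b with
  | zero =>
    have := hb 0 rfl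
    simp only [kmAc, add_zero] at this
    simpa [sq] using this
  | succ m ih =>
    rw [Function.iterate_succ_apply]
    apply ih
    intro z hz
    rw [kmAc_cr]
    calc c0 = ∑ u, ∑ v, ρ u * ρ v * c0 := by
          simp_rw [← Finset.sum_mul, ← Finset.mul_sum]; rw [← Finset.sum_mul, h1]; simp
      _ ≤ _ := by
          refine Finset.sum_le_sum fun u _ => Finset.sum_le_sum fun v _ => ?_
          by_cases hu : u ∈ T
          · by_cases hv : v ∈ T
            · refine mul_le_mul_of_nonneg_left (hb _ ⟨z, u, v, hz, hu, hv, by abel⟩) (mul_nonneg (h0 _) (h0 _))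
            · simp [hT v hv]
          · simp [hT u hu]

lemma kmF_iter (ρ b : G → ℝ) (m : ℕ) (γ : AddChar G ℂ) :
    ‖kmF ((kmCr ρ)^[m] b) γ‖ = ‖kmF ρ γ‖ ^ m * ‖kmF b γ‖ := by
  induction m with
  | zero => simp
  | succ m ih => rw [Function.iterate_succ_apply', kmF_cr, ih]; ring

lemma km_energy (ρ φ a μ : G → ℝ) (hρ : ∀ s, 0 ≤ ρ s) (hρ1 : ∑ s, ρ s = 1)
    (hφ : ∀ s, 0 ≤ φ s) (hφ1 : ∑ s, φ s = 1) (hμ : ∀ s, 0 ≤ μ s) (hμ1 : ∑ s, μ s = 1)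
    (m : ℕ) (c0 A δ : ℝ) (hδ0 : 0 ≤ δ) (hδ1 : δ ≤ 1 / 2) (hA : ∑ x, a x ^ 2 ≤ A)
    (hc : c0 ≤ ∑ x, ((kmCr ρ)^[m] (kmCr φ a)) x ^ 2)
    (hs : ∀ γ : AddChar G ℂ, 1 / 2 ≤ ‖kmF ρ γ‖ → ∑ t, μ t * ‖1 - γ t‖ ≤ δ) :
    (1 - 2 * δ) * (c0 - (1 / 4) ^ m * A) ≤ ∑ x, (kmCr μ a) x ^ 2 := by
  classical
  have hG : (0:ℝ) < Fintype.card G := by exact_mod_cast Fintype.card_pos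
  have e1 := km_parseval ((kmCr ρ)^[m] (kmCr φ a))
  have e2 := km_parseval a
  have e3 := km_parseval (kmCr μ a)
  have pt : ∀ γ : AddChar G ℂ, (1 - 2 * δ) * ‖kmF ((kmCr ρ)^[m] (kmCr φ a)) γ‖ ^ 2 ≤
      ‖kmF (kmCr μ a) γ‖ ^ 2 + (1 - 2 * δ) * (1 / 4) ^ m * ‖kmF a γ‖ ^ 2 := by
    intro γ
    rw [kmF_iter, kmF_cr, kmF_cr]
    have p1 := kmF_le_one φ hφ hφ1 γ
    have p2 := kmF_le_one ρ hρ hρ1 γ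
    have n1 := norm_nonneg (kmF φ γ)
    have n2 := norm_nonneg (kmF ρ γ)
    have n3 := norm_nonneg (kmF a γ)
    have hd : 0 ≤ 1 - 2 * δ := by linarith
    have q1 : ‖kmF φ γ‖ ^ 2 ≤ 1 := pow_le_one₀ n1 p1
    by_cases hg : 1 / 2 ≤ ‖kmF ρ γ‖
    · have s1 := hs γ hg
      have s2 : 1 - δ ≤ ‖kmF μ γ‖ := by
        have : (1:ℂ) = kmF μ γ + ∑ t, (μ t : ℂ) * (1 - γ t) := by
          unfold kmF
          rw [← Finset.sum_add_distrib]
          simp_rw [← mul_add, add_sub_cancel, mul_one]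
          rw [← Complex.ofReal_sum, hμ1]; simp
        have h2 := norm_add_le (kmF μ γ) (∑ t, (μ t : ℂ) * (1 - γ t))
        rw [← this, norm_one] at h2
        have h3 : ‖∑ t, (μ t : ℂ) * (1 - γ t)‖ ≤ ∑ t, μ t * ‖1 - γ t‖ := by
          refine (norm_sum_le _ _).trans (Finset.sum_le_sum fun t _ => ?_)
          rw [norm_mul, Complex.norm_real, Real.norm_of_nonneg (hμ t)]
        linarith
      have s3 : 1 - 2 * δ ≤ ‖kmF μ γ‖ ^ 2 := by nlinarith
      have q2 : (‖kmF ρ γ‖ ^ m) ^ 2 ≤ 1 := pow_le_one₀ (by positivity) (pow_le_one₀ n2 p2)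
      have q3 : (‖kmF ρ γ‖ ^ m * (‖kmF φ γ‖ * ‖kmF a γ‖)) ^ 2 ≤ ‖kmF a γ‖ ^ 2 := by
        rw [mul_pow, mul_pow]
        calc _ ≤ 1 * (1 * ‖kmF a γ‖ ^ 2) := by gcongr
          _ = _ := by ring
      have q4 : 0 ≤ (1 - 2 * δ) * (1 / 4) ^ m * ‖kmF a γ‖ ^ 2 := by positivity
      rw [mul_pow (‖kmF μ γ‖)]
      have : (1 - 2 * δ) * (‖kmF ρ γ‖ ^ m * (‖kmF φ γ‖ * ‖kmF a γ‖)) ^ 2 ≤ ‖kmF μ γ‖ ^ 2 * ‖kmF a γ‖ ^ 2 := by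
        gcongr
      linarith
    · push Not at hg
      have q2 : (‖kmF ρ γ‖ ^ m) ^ 2 ≤ (1 / 4) ^ m := by
        rw [← pow_mul, mul_comm, pow_mul]
        refine pow_le_pow_left₀ (by positivity) ?_ m
        nlinarith
      have q3 : (‖kmF ρ γ‖ ^ m * (‖kmF φ γ‖ * ‖kmF a γ‖)) ^ 2 ≤ (1 / 4) ^ m * ‖kmF a γ‖ ^ 2 := by
        rw [mul_pow, mul_pow]
        calc _ ≤ (1 / 4) ^ m * (1 * ‖kmF a γ‖ ^ 2) := by gcongr
          _ = _ := by ring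
      rw [mul_assoc (1 - 2 * δ)]
      have := mul_le_mul_of_nonneg_left q3 hd
      have : 0 ≤ (‖kmF μ γ‖ * ‖kmF a γ‖) ^ 2 := by positivity
      linarith
  have := Finset.sum_le_sum fun γ (_ : γ ∈ (univ : Finset (AddChar G ℂ))) => pt γ
  rw [← Finset.mul_sum, Finset.sum_add_distrib, ← Finset.mul_sum, e1, e2, e3] at this
  have hd : 0 ≤ 1 - 2 * δ := by linarith
  have t1 : (1 - 2 * δ) * c0 ≤ (1 - 2 * δ) * ∑ x, ((kmCr ρ)^[m] (kmCr φ a)) x ^ 2 := by gcongr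
  have t2 : (1 - 2 * δ) * (1 / 4) ^ m * ∑ x, a x ^ 2 ≤ (1 - 2 * δ) * (1 / 4) ^ m * A := by gcongr
  have t3 : (1 - 2 * δ) * ∑ x, ((kmCr ρ)^[m] (kmCr φ a)) x ^ 2 ≤
      ∑ x, (kmCr μ a) x ^ 2 + (1 - 2 * δ) * (1 / 4) ^ m * ∑ x, a x ^ 2 := by
    refine le_of_mul_le_mul_left ?_ hG
    linarith
  linarith

noncomputable def kmRz (c : AddChar G ℂ → ℂ) (Λ : Finset (AddChar G ℂ)) (x : G) : ℝ :=
  ∏ γ ∈ Λ, (1 + (1 / 4) * (c γ * γ x).re)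

lemma km_re_le (c : AddChar G ℂ → ℂ) (hc : ∀ γ, ‖c γ‖ ≤ 1) (γ : AddChar G ℂ) (x : G) :
    |(c γ * γ x).re| ≤ 1 := by
  refine (Complex.abs_re_le_norm _).trans ?_
  rw [norm_mul, AddChar.norm_apply, mul_one]; exact hc γ

lemma kmRz_nn (c : AddChar G ℂ → ℂ) (hc : ∀ γ, ‖c γ‖ ≤ 1) (Λ : Finset (AddChar G ℂ)) (x : G) :
    0 ≤ kmRz c Λ x := by
  refine Finset.prod_nonneg fun γ _ => ?_
  have := (abs_le.1 (km_re_le c hc γ x)).1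
  linarith

lemma kmRz_lip (c : AddChar G ℂ → ℂ) (hc : ∀ γ, ‖c γ‖ ≤ 1) (Λ : Finset (AddChar G ℂ)) (x t : G) :
    kmRz c Λ (x + t) ≤ Real.exp (∑ γ ∈ Λ, ‖1 - γ t‖) * kmRz c Λ x := by
  unfold kmRz
  rw [Real.exp_sum, ← Finset.prod_mul_distrib]
  refine Finset.prod_le_prod (fun γ _ => ?_) fun γ _ => ?_
  · have := (abs_le.1 (km_re_le c hc γ (x + t))).1
    linarith
  · have h1 := (abs_le.1 (km_re_le c hc γ x)).1
    have h2 : (c γ * γ (x + t)).re - (c γ * γ x).re ≤ ‖1 - γ t‖ := by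
      rw [← Complex.sub_re]
      refine (Complex.re_le_norm _).trans ?_
      rw [AddChar.map_add_eq_mul, show c γ * (γ x * γ t) - c γ * γ x = -(c γ * γ x * (1 - γ t)) by ring,
        norm_neg, norm_mul, norm_mul, AddChar.norm_apply, mul_one]
      have := hc γ; have := norm_nonneg (1 - γ t); nlinarith
    have h3 := Real.add_one_le_exp (‖1 - γ t‖)
    have h4 := norm_nonneg (1 - γ t)
    nlinarith

lemma km_exp_lower {u : ℝ} (h : |u| ≤ 1 / 4) : Real.exp (u - 1 / 12) ≤ 1 + u := by
  have h1 := abs_le.1 h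
  have h2 := Real.one_sub_inv_le_log_of_pos (show 0 < 1 + u by linarith)
  rw [← Real.le_log_iff_exp_le (by linarith)]
  refine le_trans ?_ h2
  have e : 1 - (1 + u)⁻¹ = u / (1 + u) := by
    have : (1 + u) ≠ 0 := by linarith
    field_simp; ring
  rw [e, le_div_iff₀ (by linarith)]
  nlinarith

lemma km_chang_card (σ ρ : G → ℝ) (hσ : ∀ s, 0 ≤ σ s) (hρ : ∀ s, 0 ≤ ρ s) (hρ1 : ∑ s, ρ s = 1)
    (τ : ℝ) (hτ : 0 < τ) (hρσ : ∀ s, ρ s ≤ τ⁻¹ * σ s) (Λ : Finset (AddChar G ℂ))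
    (hΛ : ∀ γ ∈ Λ, 1 / 2 ≤ ‖kmF ρ γ‖)
    (hg : ∀ c : AddChar G ℂ → ℂ, (∀ γ, ‖c γ‖ ≤ 1) → ∑ x, σ x * kmRz c Λ x ≤ 2 * (1 + 1 / 100) ^ #Λ) :
    (#Λ : ℝ) ≤ 32 * Real.log (2 / τ) := by
  classical
  have : ∀ z : ℂ, ∃ c : ℂ, ‖c‖ ≤ 1 ∧ (c * z).re = ‖z‖ := by
    intro z
    by_cases hz : z = 0
    · exact ⟨0, by simp, by simp [hz]⟩
    · refine ⟨(starRingEnd ℂ) z / ‖z‖, ?_, ?_⟩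
      · rw [norm_div, Complex.norm_conj, Complex.norm_real, norm_norm, div_self (by simpa using hz)]
      · have hz' : (‖z‖ : ℂ) ≠ 0 := by simpa using hz
        have : (starRingEnd ℂ) z / ‖z‖ * z = (‖z‖ : ℂ) := by
          rw [div_mul_eq_mul_div, mul_comm, Complex.mul_conj', sq, mul_div_assoc, div_self hz', mul_one]
        rw [this, Complex.ofReal_re]
  choose cz hcz1 hcz2 using this
  set c : AddChar G ℂ → ℂ := fun γ => cz (kmF ρ γ) with hcdef
  have hc : ∀ γ, ‖c γ‖ ≤ 1 := fun γ => hcz1 _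
  have h1 := hg c hc
  set g : G → ℝ := fun x => ∑ γ ∈ Λ, ((1 / 4) * (c γ * γ x).re - 1 / 12) with hgdef
  have hP : ∀ x, Real.exp (g x) ≤ kmRz c Λ x := by
    intro x
    unfold kmRz
    rw [hgdef, Real.exp_sum]
    refine Finset.prod_le_prod (fun γ _ => (Real.exp_pos _).le) fun γ _ => ?_
    apply km_exp_lower
    rw [abs_mul, abs_of_pos (by norm_num : (0:ℝ) < 1 / 4)]
    have := km_re_le c hc γ x; linarith
  have hgbar : (#Λ : ℝ) / 24 ≤ ∑ x, ρ x * g x := by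
    have : ∑ x, ρ x * g x = ∑ γ ∈ Λ, ((1 / 4) * ‖kmF ρ γ‖ - 1 / 12) := by
      simp_rw [hgdef, Finset.mul_sum]
      rw [Finset.sum_comm]
      refine Finset.sum_congr rfl fun γ _ => ?_
      rw [← hcz2 (kmF ρ γ)]
      change _ = 1 / 4 * (c γ * kmF ρ γ).re - 1 / 12
      simp_rw [mul_sub]
      rw [Finset.sum_sub_distrib, ← Finset.sum_mul, hρ1, one_mul, kmF, Finset.mul_sum, Complex.re_sum, Finset.mul_sum]
      congr 1
      refine Finset.sum_congr rfl fun x _ => ?_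
      rw [show c γ * (↑(ρ x) * γ x) = ↑(ρ x) * (c γ * γ x) by ring, Complex.re_ofReal_mul]; ring
    rw [this]
    calc (#Λ : ℝ) / 24 = ∑ γ ∈ Λ, (1 / 24 : ℝ) := by rw [Finset.sum_const, nsmul_eq_mul]; ring
      _ ≤ _ := Finset.sum_le_sum fun γ hγ => by have := hΛ γ hγ; linarith
  set gb := ∑ x, ρ x * g x with hgb
  have hJ : Real.exp gb ≤ ∑ x, ρ x * Real.exp (g x) := by
    calc Real.exp gb = Real.exp gb * (∑ x, ρ x * (1 + (g x - gb))) := by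
          simp_rw [mul_add, mul_sub, Finset.sum_add_distrib, Finset.sum_sub_distrib, ← Finset.sum_mul, hρ1]
          rw [← hgb]; ring
      _ = ∑ x, ρ x * (Real.exp gb * (1 + (g x - gb))) := by
          rw [Finset.mul_sum]; exact Finset.sum_congr rfl fun x _ => by ring
      _ ≤ _ := by
          refine Finset.sum_le_sum fun x _ => mul_le_mul_of_nonneg_left ?_ (hρ x)
          have := Real.add_one_le_exp (g x - gb)
          calc _ ≤ Real.exp gb * Real.exp (g x - gb) := by gcongr; linarith
            _ = _ := by rw [← Real.exp_add]; congr 1; ring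
  have h2 : ∑ x, ρ x * Real.exp (g x) ≤ τ⁻¹ * ∑ x, σ x * kmRz c Λ x := by
    rw [Finset.mul_sum]
    refine Finset.sum_le_sum fun x _ => ?_
    rw [← mul_assoc]
    exact mul_le_mul (hρσ x) (hP x) (Real.exp_pos _).le (mul_nonneg (by positivity) (hσ x))
  have h3 : (1 + 1 / 100 : ℝ) ^ #Λ ≤ Real.exp (#Λ / 100) := by
    rw [show (#Λ : ℝ) / 100 = #Λ * (1 / 100) by ring, Real.exp_nat_mul]
    refine pow_le_pow_left₀ (by norm_num) ?_ _
    have := Real.add_one_le_exp (1 / 100 : ℝ); linarith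
  have h4 : Real.exp (#Λ / 24) ≤ 2 / τ * Real.exp (#Λ / 100) := by
    calc _ ≤ Real.exp gb := Real.exp_le_exp.2 hgbar
      _ ≤ τ⁻¹ * (2 * Real.exp (#Λ / 100)) := by
          refine hJ.trans (h2.trans ?_)
          gcongr; exact h1.trans (by gcongr)
      _ = _ := by ring
  have h5 : Real.exp (#Λ / 24 - #Λ / 100) ≤ 2 / τ := by
    rw [Real.exp_sub, div_le_iff₀ (Real.exp_pos _)]; exact h4
  have h6 := (Real.le_log_iff_exp_le (by positivity)).2 h5
  have : (0:ℝ) ≤ #Λ := Nat.cast_nonneg _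
  linarith

lemma km_chang (σ ρ h : G → ℝ) (H : KmLen h) (hσ : ∀ s, 0 ≤ σ s) (hσ2 : ∑ s, σ s ≤ 2)
    (hσh : ∀ x t, σ (x + t) ≤ Real.exp (h t) * σ x)
    (hρ : ∀ s, 0 ≤ ρ s) (hρ1 : ∑ s, ρ s = 1)
    (τ : ℝ) (hτ : 0 < τ) (hρσ : ∀ s, ρ s ≤ τ⁻¹ * σ s) :
    ∃ Λ : Finset (AddChar G ℂ), (#Λ : ℝ) ≤ 32 * Real.log (2 / τ) ∧
      ∀ γ, 1 / 2 ≤ ‖kmF ρ γ‖ → ∀ t, ‖1 - γ t‖ ≤ 25 * (Real.exp (h t + ∑ γ ∈ Λ, ‖1 - γ t‖) - 1) := by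
  classical
  set good : Finset (Finset (AddChar G ℂ)) := univ.filter fun Λ => (∀ γ ∈ Λ, 1 / 2 ≤ ‖kmF ρ γ‖) ∧
    (∀ c : AddChar G ℂ → ℂ, (∀ γ, ‖c γ‖ ≤ 1) → ∑ x, σ x * kmRz c Λ x ≤ 2 * (1 + 1 / 100) ^ #Λ) with hgood
  obtain ⟨Λ, hΛm, hmax⟩ := Finset.exists_max_image good (fun Λ => #Λ)
    ⟨∅, by simp only [hgood, mem_filter, mem_univ, true_and]; simp [kmRz]; exact fun _ _ => hσ2⟩
  obtain ⟨hΛ, hΛg⟩ := (Finset.mem_filter.1 hΛm).2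
  refine ⟨Λ, km_chang_card σ ρ hσ hρ hρ1 τ hτ hρσ Λ hΛ hΛg, fun γ hγ t => ?_⟩
  set Y := h t + ∑ γ ∈ Λ, ‖1 - γ t‖ with hY
  have hY0 : 0 ≤ Y := add_nonneg (H.nn t) (Finset.sum_nonneg fun _ _ => norm_nonneg _)
  have hYe := Real.add_one_le_exp Y
  by_cases hmem : γ ∈ Λ
  · have h1 : ‖1 - γ t‖ ≤ ∑ γ ∈ Λ, ‖1 - γ t‖ :=
      Finset.single_le_sum (f := fun γ : AddChar G ℂ => ‖1 - γ t‖) (fun _ _ => norm_nonneg _) hmem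
    have := H.nn t
    linarith
  have hng : insert γ Λ ∉ good := by
    intro hin
    have := hmax _ hin
    rw [Finset.card_insert_of_notMem hmem] at this
    omega
  have : ∃ c : AddChar G ℂ → ℂ, (∀ γ, ‖c γ‖ ≤ 1) ∧
      2 * (1 + 1 / 100 : ℝ) ^ (#Λ + 1) < ∑ x, σ x * kmRz c (insert γ Λ) x := by
    by_contra hcon
    push Not at hcon
    apply hng
    simp only [hgood, mem_filter, mem_univ, true_and]
    refine ⟨?_, ?_⟩
    · intro δ hδ
      rcases Finset.mem_insert.1 hδ with rfl | h
      · exact hγ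
      · exact hΛ _ h
    · rw [Finset.card_insert_of_notMem hmem]; exact hcon
  obtain ⟨c, hc, hbig⟩ := this
  set ν : G → ℝ := fun x => σ x * kmRz c Λ x with hν
  have hν0 : ∀ x, 0 ≤ ν x := fun x => mul_nonneg (hσ x) (kmRz_nn c hc Λ x)
  have hνs : ∑ x, ν x ≤ 2 * (1 + 1 / 100) ^ #Λ := hΛg c hc
  have e1 : ∑ x, σ x * kmRz c (insert γ Λ) x = ∑ x, ν x + (1 / 4) * (c γ * kmF ν γ).re := by
    rw [kmF, Finset.mul_sum, Complex.re_sum, Finset.mul_sum, ← Finset.sum_add_distrib]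
    refine Finset.sum_congr rfl fun x _ => ?_
    rw [show c γ * (↑(ν x) * γ x) = ↑(ν x) * (c γ * γ x) by ring, Complex.re_ofReal_mul]
    simp only [hν, kmRz]
    rw [Finset.prod_insert hmem]; ring
  have e2 : (c γ * kmF ν γ).re ≤ ‖kmF ν γ‖ := by
    refine (Complex.re_le_norm _).trans ?_
    rw [norm_mul]
    have := hc γ; have := norm_nonneg (kmF ν γ); nlinarith
  have e3 : (1 / 25) * ∑ x, ν x ≤ ‖kmF ν γ‖ := by
    rw [pow_succ] at hbig
    have : (0:ℝ) ≤ (1 + 1 / 100) ^ #Λ := by positivity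
    linarith
  have hνpos : 0 < ‖kmF ν γ‖ := by
    rw [pow_succ] at hbig
    have : (0:ℝ) < (1 + 1 / 100) ^ #Λ := by positivity
    linarith
  have hlip : ∀ x t, ν (x + t) ≤ Real.exp (h t + ∑ γ ∈ Λ, ‖1 - γ t‖) * ν x := by
    intro x t
    rw [Real.exp_add]
    calc ν (x + t) ≤ (Real.exp (h t) * σ x) * (Real.exp (∑ γ ∈ Λ, ‖1 - γ t‖) * kmRz c Λ x) :=
          mul_le_mul (hσh x t) (kmRz_lip c hc Λ x t) (kmRz_nn c hc Λ _) (mul_nonneg (Real.exp_pos _).le (hσ x))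
      _ = _ := by simp only [hν]; ring
  have hYneg : h (-t) + ∑ γ ∈ Λ, ‖1 - γ (-t)‖ = Y := by
    rw [H.sym, hY]; congr 1
    refine Finset.sum_congr rfl fun γ _ => ?_
    rw [AddChar.map_neg_eq_conj, ← Complex.norm_conj]; simp
  have hdiff : ∀ x, |ν (x + t) - ν x| ≤ (Real.exp Y - 1) * ν x := by
    intro x
    have a := hlip x t
    have b := hlip (x + t) (-t)
    rw [hYneg, add_neg_cancel_right] at b
    rw [abs_le]
    have p := hν0 x
    refine ⟨?_, by linarith⟩
    have hpos := Real.exp_pos Y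
    have : (2 - Real.exp Y) * Real.exp Y ≤ 1 := by nlinarith [sq_nonneg (Real.exp Y - 1)]
    have q := hν0 (x + t)
    by_cases h2 : 2 - Real.exp Y ≤ 0
    · nlinarith
    · push Not at h2
      have := mul_le_mul_of_nonneg_left b h2.le
      nlinarith
  have hkey : ‖1 - γ t‖ * ‖kmF ν γ‖ ≤ (Real.exp Y - 1) * ∑ x, ν x := by
    have id : (1 - γ t) * ∑ x, (ν (x + t) : ℂ) * γ x = ∑ x, ((ν (x + t) : ℂ) - ν x) * γ x := by
      simp_rw [sub_mul]
      rw [one_mul, Finset.sum_sub_distrib]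
      congr 1
      rw [← Equiv.sum_comp (Equiv.addRight t) (fun x => (ν x : ℂ) * γ x), Finset.mul_sum]
      refine Finset.sum_congr rfl fun x _ => ?_
      simp only [Equiv.coe_addRight]
      rw [AddChar.map_add_eq_mul]; ring
    have id2 : kmF ν γ = γ t * ∑ x, (ν (x + t) : ℂ) * γ x := by
      rw [kmF, ← Equiv.sum_comp (Equiv.addRight t) (fun x => (ν x : ℂ) * γ x), Finset.mul_sum]
      refine Finset.sum_congr rfl fun x _ => ?_
      simp only [Equiv.coe_addRight]
      rw [AddChar.map_add_eq_mul]; ring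
    rw [id2, norm_mul, AddChar.norm_apply, one_mul, ← norm_mul, id, Finset.mul_sum]
    refine (norm_sum_le _ _).trans (Finset.sum_le_sum fun x _ => ?_)
    rw [norm_mul, AddChar.norm_apply, mul_one, ← Complex.ofReal_sub, Complex.norm_real]
    exact hdiff x
  have : ‖1 - γ t‖ * ‖kmF ν γ‖ ≤ (25 * (Real.exp Y - 1)) * ‖kmF ν γ‖ := by
    refine hkey.trans ?_
    have : 0 ≤ Real.exp Y - 1 := by linarith
    nlinarith
  exact le_of_mul_le_mul_right this hνpos

end KM5

open Finset
set_option linter.unusedSectionVars false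
set_option linter.unusedVariables false

section KM6
variable {G : Type} [AddCommGroup G] [Fintype G]

def KmIs (r b : ℝ) (ℓ : G → ℝ) : Prop :=
  ∃ (ι : Type) (_ : Fintype ι) (γ : ι → AddChar G ℂ) (c : ι → ℝ), (Fintype.card ι : ℝ) ≤ r ∧
    (∀ i, 0 ≤ c i ∧ c i ≤ b) ∧ ∀ t, ℓ t = ∑ i, c i * ‖1 - γ i t‖

lemma km_one_sub (γ : AddChar G ℂ) (x y : G) : ‖1 - γ (x - y)‖ = ‖γ y - γ x‖ := by
  have : γ y - γ x = γ y * (1 - γ (x - y)) := by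
    rw [mul_sub, mul_one, ← AddChar.map_add_eq_mul]; congr 2; abel
  rw [this, norm_mul, AddChar.norm_apply, one_mul]

lemma KmIs.len {r b : ℝ} {ℓ : G → ℝ} (h : KmIs r b ℓ) : KmLen ℓ := by
  obtain ⟨ι, _, γ, c, h1, h2, h3⟩ := h
  constructor
  · intro x; rw [h3]; exact Finset.sum_nonneg fun i _ => mul_nonneg (h2 i).1 (norm_nonneg _)
  · rw [h3]; simp
  · intro x; rw [h3, h3]
    refine Finset.sum_congr rfl fun i _ => ?_
    rw [← zero_sub x, km_one_sub, AddChar.map_zero_eq_one, norm_sub_rev]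
  · intro x y; rw [h3, h3, h3, ← Finset.sum_add_distrib]
    refine Finset.sum_le_sum fun i _ => ?_
    rw [← mul_add]
    refine mul_le_mul_of_nonneg_left ?_ (h2 i).1
    have e : 1 - γ i (x + y) = (1 - γ i x) + γ i x * (1 - γ i y) := by rw [AddChar.map_add_eq_mul]; ring
    rw [e]; refine (norm_add_le _ _).trans ?_
    rw [norm_mul, AddChar.norm_apply, one_mul]

lemma KmIs.r0 {r b : ℝ} {ℓ : G → ℝ} (h : KmIs r b ℓ) : 0 ≤ r := by
  obtain ⟨ι, _, γ, c, h1, h2, h3⟩ := h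
  exact (Nat.cast_nonneg _).trans h1

lemma KmIs.mono {r b r' b' : ℝ} {ℓ : G → ℝ} (h : KmIs r b ℓ) (hr : r ≤ r') (hb : b ≤ b') : KmIs r' b' ℓ := by
  obtain ⟨ι, i1, γ, c, h1, h2, h3⟩ := h
  exact ⟨ι, i1, γ, c, h1.trans hr, fun i => ⟨(h2 i).1, (h2 i).2.trans hb⟩, h3⟩

lemma KmIs.smul {r b : ℝ} {ℓ : G → ℝ} (h : KmIs r b ℓ) (k : ℝ) (hk : 0 ≤ k) :
    KmIs r (k * b) (fun t => k * ℓ t) := by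
  obtain ⟨ι, i1, γ, c, h1, h2, h3⟩ := h
  refine ⟨ι, i1, γ, fun i => k * c i, h1, fun i => ⟨mul_nonneg hk (h2 i).1, mul_le_mul_of_nonneg_left (h2 i).2 hk⟩, fun t => ?_⟩
  simp only []; rw [h3, Finset.mul_sum]; exact Finset.sum_congr rfl fun i _ => by ring

lemma KmIs.comp {r b : ℝ} {ℓ : G → ℝ} (h : KmIs r b ℓ) (H : G →+ G) : KmIs r b (fun t => ℓ (H t)) := by
  obtain ⟨ι, i1, γ, c, h1, h2, h3⟩ := h
  exact ⟨ι, i1, fun i => (γ i).compAddMonoidHom H, c, h1, h2, fun t => h3 _⟩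

lemma KmIs.add {r b r' : ℝ} {ℓ ℓ' : G → ℝ} (h : KmIs r b ℓ) (h' : KmIs r' b ℓ') :
    KmIs (r + r') b (fun t => ℓ t + ℓ' t) := by
  obtain ⟨ι, i1, γ, c, h1, h2, h3⟩ := h
  obtain ⟨ι', i1', γ', c', h1', h2', h3'⟩ := h'
  refine ⟨ι ⊕ ι', inferInstance, Sum.elim γ γ', Sum.elim c c', ?_, ?_, ?_⟩
  · rw [Fintype.card_sum]; push_cast; linarith
  · rintro (i | i); exacts [h2 i, h2' i]
  · intro t; simp only []; rw [h3, h3', Fintype.sum_sum_type]; simp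

lemma KmIs.finset (Λ : Finset (AddChar G ℂ)) : KmIs (#Λ : ℝ) 1 (fun t => ∑ γ ∈ Λ, ‖1 - γ t‖) := by
  refine ⟨Λ, inferInstance, fun i => i.1, fun _ => 1, by simp, fun _ => ⟨by norm_num, le_rfl⟩, fun t => ?_⟩
  simp only [one_mul]
  exact (Finset.sum_coe_sort Λ (fun γ => ‖1 - γ t‖)).symm

lemma KmIs.zero : KmIs 0 0 (fun _ : G => 0) :=
  ⟨Empty, inferInstance, fun i => i.elim, fun i => i.elim, by simp, fun i => i.elim, fun t => by simp⟩

noncomputable def kmZ (ℓ : G → ℝ) : ℝ := ∑ x, Real.exp (-ℓ x)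
noncomputable def kmM (ℓ : G → ℝ) (x : G) : ℝ := Real.exp (-ℓ x) / kmZ ℓ

lemma kmZ_pos (ℓ : G → ℝ) : 0 < kmZ ℓ :=
  Finset.sum_pos (fun x _ => Real.exp_pos _) ⟨0, mem_univ _⟩

lemma kmM_pos (ℓ : G → ℝ) (x : G) : 0 < kmM ℓ x := div_pos (Real.exp_pos _) (kmZ_pos ℓ)

lemma kmM_sum (ℓ : G → ℝ) : ∑ x, kmM ℓ x = 1 := by
  unfold kmM; rw [← Finset.sum_div]; exact div_self (kmZ_pos ℓ).ne'

lemma kmM_lip {ℓ : G → ℝ} (H : KmLen ℓ) (x t : G) : kmM ℓ (x + t) ≤ Real.exp (ℓ t) * kmM ℓ x := by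
  unfold kmM
  rw [← mul_div_assoc, ← Real.exp_add]
  have := kmZ_pos ℓ
  gcongr
  have := H.sub (x + t) t
  rw [add_sub_cancel_right] at this; linarith

lemma kmM_le {ℓ : G → ℝ} (H : KmLen ℓ) (x : G) : kmM ℓ x ≤ 1 / kmZ ℓ := by
  unfold kmM
  have := kmZ_pos ℓ
  gcongr
  rw [Real.exp_le_one_iff]; have := H.nn x; linarith

lemma km_doubling {r b : ℝ} {ℓ : G → ℝ} (h : KmIs r b ℓ) :
    kmZ (fun x => ℓ x / 2) ≤ Real.exp (7 * r) * kmZ ℓ := by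
  classical
  obtain ⟨ι, i1, γ, c, h1, h2, h3⟩ := h
  set z : ι → G → ℂ := fun i x => c i * (1 - γ i x) with hz
  have hzn : ∀ i x, ‖z i x‖ = c i * ‖1 - γ i x‖ := fun i x => by
    rw [hz]; simp only []; rw [norm_mul, Complex.norm_real, Real.norm_of_nonneg (h2 i).1]
  set J : G → ι → (Bool × ℕ) × (Bool × ℕ) := fun x i =>
    ((decide (0 ≤ (z i x).re), ⌊|(z i x).re|⌋₊), (decide (0 ≤ (z i x).im), ⌊|(z i x).im|⌋₊)) with hJ
  have hcell : ∀ a a' : ℝ, decide (0 ≤ a) = decide (0 ≤ a') → ⌊|a|⌋₊ = ⌊|a'|⌋₊ → |a - a'| ≤ 1 := by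
    intro a a' h1 h2
    have f1 := Nat.floor_le (abs_nonneg a)
    have f2 := Nat.lt_floor_add_one |a|
    have f3 := Nat.floor_le (abs_nonneg a')
    have f4 := Nat.lt_floor_add_one |a'|
    rw [h2] at f1 f2
    generalize (⌊|a'|⌋₊ : ℝ) = n at *
    rw [decide_eq_decide] at h1
    by_cases hs : 0 ≤ a
    · have hs' := h1.1 hs
      rw [abs_of_nonneg hs] at f1 f2; rw [abs_of_nonneg hs'] at f3 f4
      rw [abs_le]; constructor <;> linarith
    · have hs' : ¬ 0 ≤ a' := fun q => hs (h1.2 q)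
      push Not at hs hs'
      rw [abs_of_neg hs] at f1 f2; rw [abs_of_neg hs'] at f3 f4
      rw [abs_le]; constructor <;> linarith
  set N0 : Finset G := univ.filter fun t => ∀ i, c i * ‖1 - γ i t‖ ≤ 2 with hN0
  have hZ : Real.exp (-(2 * r)) * #N0 ≤ kmZ ℓ := by
    calc _ = ∑ x ∈ N0, Real.exp (-(2 * r)) := by rw [Finset.sum_const, nsmul_eq_mul]; ring
      _ ≤ ∑ x ∈ N0, Real.exp (-ℓ x) := by
          refine Finset.sum_le_sum fun x hx => Real.exp_le_exp.2 ?_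
          rw [h3, neg_le_neg_iff]
          calc _ ≤ ∑ i : ι, (2:ℝ) := Finset.sum_le_sum fun i _ => (Finset.mem_filter.1 hx).2 i
            _ = 2 * Fintype.card ι := by simp; ring
            _ ≤ _ := by linarith
      _ ≤ _ := Finset.sum_le_sum_of_subset_of_nonneg (Finset.subset_univ _) fun x _ _ => (Real.exp_pos _).le
  have hfib : ∀ j, (#(univ.filter fun x => J x = j) : ℝ) ≤ #N0 := by
    intro j
    rcases (univ.filter fun x => J x = j).eq_empty_or_nonempty with he | ⟨y, hy⟩
    · rw [he]; simp
    · norm_cast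
      refine Finset.card_le_card_of_injOn (fun x => x - y) ?_ (fun a _ b _ hab => by simpa using hab)
      intro x hx
      have hx' : J x = j := by simpa using hx
      have hy' : J y = j := by simpa using hy
      simp only [hN0, coe_filter, mem_univ, true_and, Set.mem_ofPred_eq]
      intro i
      have hxy : J x i = J y i := by rw [hx', hy']
      simp only [hJ, Prod.mk.injEq] at hxy
      have r1 := hcell _ _ hxy.1.1 hxy.1.2
      have r2 := hcell _ _ hxy.2.1 hxy.2.2
      have : c i * ‖1 - γ i (x - y)‖ = ‖z i x - z i y‖ := by
        rw [km_one_sub, hz]; simp only []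
        rw [← mul_sub, norm_mul, Complex.norm_real, Real.norm_of_nonneg (h2 i).1]
        congr 2; ring
      rw [this]
      refine (Complex.norm_le_abs_re_add_abs_im _).trans ?_
      rw [Complex.sub_re, Complex.sub_im]; linarith
  set g : (Bool × ℕ) × (Bool × ℕ) → ℝ := fun j => (4 / 5) ^ j.1.2 * (4 / 5) ^ j.2.2 with hg
  have hg0 : ∀ j, 0 ≤ g j := fun j => by positivity
  have hex : ∀ a : ℝ, Real.exp (-(|a| / 4)) ≤ (4 / 5) ^ ⌊|a|⌋₊ := by
    intro a
    have f1 := Nat.floor_le (abs_nonneg a)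
    calc _ ≤ Real.exp (⌊|a|⌋₊ * (-(1 / 4))) := by
          apply Real.exp_le_exp.2; linarith
      _ = Real.exp (-(1 / 4)) ^ ⌊|a|⌋₊ := Real.exp_nat_mul _ _
      _ ≤ _ := by
          refine pow_le_pow_left₀ (Real.exp_pos _).le ?_ _
          rw [Real.exp_neg, inv_le_comm₀ (Real.exp_pos _) (by norm_num)]
          have := Real.add_one_le_exp (1 / 4 : ℝ); norm_num at this ⊢; linarith
  have hpt : ∀ x, Real.exp (-(ℓ x / 2)) ≤ ∏ i, g (J x i) := by
    intro x
    rw [h3, Finset.sum_div, ← Finset.sum_neg_distrib, Real.exp_sum]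
    refine Finset.prod_le_prod (fun i _ => (Real.exp_pos _).le) fun i _ => ?_
    rw [← hzn]
    have r1 := Complex.abs_re_le_norm (z i x)
    have r2 := Complex.abs_im_le_norm (z i x)
    calc _ ≤ Real.exp (-(|(z i x).re| / 4)) * Real.exp (-(|(z i x).im| / 4)) := by
          rw [← Real.exp_add]; apply Real.exp_le_exp.2; linarith
      _ ≤ _ := mul_le_mul (hex _) (hex _) (Real.exp_pos _).le (by positivity)
  set R := ⌊2 * b⌋₊ + 1 with hR
  set box : Finset ((Bool × ℕ) × (Bool × ℕ)) := (univ ×ˢ range R) ×ˢ (univ ×ˢ range R) with hbox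
  have hJbox : ∀ x, J x ∈ Fintype.piFinset (fun _ : ι => box) := by
    intro x
    rw [Fintype.mem_piFinset]
    intro i
    have hb : ‖z i x‖ ≤ 2 * b := by
      rw [hzn]
      have : ‖1 - γ i x‖ ≤ 2 := by
        refine (norm_sub_le _ _).trans ?_; rw [AddChar.norm_apply, norm_one]; norm_num
      have := h2 i; have := norm_nonneg (1 - γ i x); nlinarith
    have r1 := (Complex.abs_re_le_norm (z i x)).trans hb
    have r2 := (Complex.abs_im_le_norm (z i x)).trans hb
    simp only [hbox, hJ, mem_product, mem_univ, true_and, mem_range, hR]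
    exact ⟨Nat.lt_succ_of_le (Nat.floor_mono r1), Nat.lt_succ_of_le (Nat.floor_mono r2)⟩
  have hgeo : ∑ n ∈ range R, (4 / 5 : ℝ) ^ n ≤ 5 := by
    rw [geom_sum_eq (by norm_num)]
    have : (0:ℝ) ≤ (4 / 5) ^ R := by positivity
    rw [div_le_iff_of_neg (by norm_num)]; linarith
  have hgeo0 : (0:ℝ) ≤ ∑ n ∈ range R, (4 / 5 : ℝ) ^ n := by positivity
  have hgs : ∑ j ∈ box, g j ≤ 100 := by
    rw [hbox, Finset.sum_product]
    simp only [hg]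
    rw [← Finset.sum_mul_sum, Finset.sum_product]
    simp only [Fintype.sum_bool]
    nlinarith
  have hgs0 : 0 ≤ ∑ j ∈ box, g j := Finset.sum_nonneg fun j _ => hg0 j
  have hmain : kmZ (fun x => ℓ x / 2) ≤ #N0 * 100 ^ Fintype.card ι := by
    calc kmZ (fun x => ℓ x / 2) ≤ ∑ x, ∏ i, g (J x i) := Finset.sum_le_sum fun x _ => hpt x
      _ = ∑ j ∈ Fintype.piFinset (fun _ : ι => box), ∑ x ∈ univ.filter (fun x => J x = j), ∏ i, g (J x i) :=
          (Finset.sum_fiberwise_of_maps_to (fun x _ => hJbox x) _).symm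
      _ ≤ ∑ j ∈ Fintype.piFinset (fun _ : ι => box), #N0 * ∏ i, g (j i) := by
          refine Finset.sum_le_sum fun j _ => ?_
          calc _ = ∑ x ∈ univ.filter (fun x => J x = j), ∏ i, g (j i) :=
                Finset.sum_congr rfl fun x hx => by rw [(Finset.mem_filter.1 hx).2]
            _ ≤ _ := by
                rw [Finset.sum_const, nsmul_eq_mul]
                exact mul_le_mul_of_nonneg_right (hfib j) (Finset.prod_nonneg fun i _ => hg0 _)
      _ = #N0 * (∑ j ∈ box, g j) ^ Fintype.card ι := by
          rw [← Finset.mul_sum, ← Finset.prod_univ_sum]; simp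
      _ ≤ _ := by gcongr
  have h100 : (100 : ℝ) ≤ Real.exp 5 := by
    have := Real.exp_one_gt_d9
    calc (100:ℝ) ≤ 2.7 ^ 5 := by norm_num
      _ ≤ Real.exp 1 ^ 5 := by gcongr; linarith
      _ = _ := by rw [← Real.exp_nat_mul]; norm_num
  calc _ ≤ #N0 * Real.exp 5 ^ Fintype.card ι := hmain.trans (by gcongr)
    _ = Real.exp (5 * Fintype.card ι) * #N0 := by rw [← Real.exp_nat_mul, mul_comm, mul_comm (5:ℝ)]
    _ ≤ Real.exp (5 * r) * #N0 := by gcongr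
    _ = Real.exp (7 * r) * (Real.exp (-(2 * r)) * #N0) := by
        rw [← mul_assoc, ← Real.exp_add]; congr 2; ring
    _ ≤ _ := by gcongr

lemma km_mom {r b : ℝ} {ℓ : G → ℝ} (h : KmIs r b ℓ) (θ : ℝ) (h0 : 0 ≤ θ) (h1 : θ ≤ 1 / 2) (g : G → ℝ)
    (hg : ∀ x, g x ≤ θ * ℓ x) : ∑ x, kmM ℓ x * Real.exp (g x) ≤ Real.exp (14 * r * θ) := by
  have hd := km_doubling h
  have hZ := kmZ_pos ℓ
  have e1 : ∑ x, kmM ℓ x * Real.exp (ℓ x / 2) ≤ Real.exp (7 * r) := by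
    have : ∑ x, kmM ℓ x * Real.exp (ℓ x / 2) = kmZ (fun x => ℓ x / 2) / kmZ ℓ := by
      rw [kmZ, Finset.sum_div]
      refine Finset.sum_congr rfl fun x _ => ?_
      rw [kmM, div_mul_eq_mul_div, ← Real.exp_add]; congr 2; ring
    rw [this, div_le_iff₀ hZ]; exact hd
  have pt : ∀ x, Real.exp ((1 - 2 * θ) * (7 * r)) * Real.exp (g x) ≤
      (2 * θ) * Real.exp (ℓ x / 2) + (1 - 2 * θ) * Real.exp (7 * r) := by
    intro x
    have := convexOn_exp.2 (Set.mem_univ (ℓ x / 2)) (Set.mem_univ (7 * r)) (by linarith : 0 ≤ 2 * θ)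
      (by linarith : 0 ≤ 1 - 2 * θ) (by ring)
    simp only [smul_eq_mul] at this
    refine le_trans ?_ this
    rw [← Real.exp_add]
    apply Real.exp_le_exp.2
    have := hg x; linarith
  have e2 : Real.exp ((1 - 2 * θ) * (7 * r)) * ∑ x, kmM ℓ x * Real.exp (g x) ≤ Real.exp (7 * r) := by
    calc _ = ∑ x, kmM ℓ x * (Real.exp ((1 - 2 * θ) * (7 * r)) * Real.exp (g x)) := by
          rw [Finset.mul_sum]; exact Finset.sum_congr rfl fun x _ => by ring
      _ ≤ ∑ x, kmM ℓ x * ((2 * θ) * Real.exp (ℓ x / 2) + (1 - 2 * θ) * Real.exp (7 * r)) :=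
          Finset.sum_le_sum fun x _ => mul_le_mul_of_nonneg_left (pt x) (kmM_pos ℓ x).le
      _ = (2 * θ) * ∑ x, kmM ℓ x * Real.exp (ℓ x / 2) + (1 - 2 * θ) * Real.exp (7 * r) * ∑ x, kmM ℓ x := by
          rw [Finset.mul_sum, Finset.mul_sum, ← Finset.sum_add_distrib]
          exact Finset.sum_congr rfl fun x _ => by ring
      _ ≤ (2 * θ) * Real.exp (7 * r) + (1 - 2 * θ) * Real.exp (7 * r) * 1 := by
          rw [kmM_sum]; gcongr
      _ = _ := by ring
  have e3 : Real.exp (14 * r * θ) = Real.exp (7 * r) / Real.exp ((1 - 2 * θ) * (7 * r)) := by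
    rw [← Real.exp_sub]; congr 1; ring
  rw [e3, le_div_iff₀ (Real.exp_pos _)]; linarith

lemma kmZ_lower {r b : ℝ} {ℓ : G → ℝ} (h : KmIs r b ℓ) (n : ℕ) (hn : 2 * b ≤ 2 ^ n) :
    Fintype.card G * Real.exp (-(7 * r * n + r)) ≤ kmZ ℓ := by
  have hr := h.r0
  induction n generalizing b ℓ with
  | zero =>
    obtain ⟨ι, i1, γ, c, h1, h2, h3⟩ := h
    calc _ = ∑ x : G, Real.exp (-r) := by rw [Finset.sum_const, nsmul_eq_mul]; simp
      _ ≤ _ := by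
          refine Finset.sum_le_sum fun x _ => Real.exp_le_exp.2 ?_
          rw [h3, neg_le_neg_iff]
          calc _ ≤ ∑ i : ι, (1:ℝ) := by
                refine Finset.sum_le_sum fun i _ => ?_
                have : ‖1 - γ i x‖ ≤ 2 := by
                  refine (norm_sub_le _ _).trans ?_; rw [AddChar.norm_apply, norm_one]; norm_num
                have := h2 i; have := norm_nonneg (1 - γ i x)
                rw [pow_zero] at hn
                nlinarith
            _ ≤ _ := by simpa using h1
  | succ n ih =>
    have h' := h.smul (1 / 2) (by norm_num)
    have e := ih h' (by rw [pow_succ] at hn; linarith)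
    have d := km_doubling h
    have e2 : kmZ (fun t => 1 / 2 * ℓ t) = kmZ (fun x => ℓ x / 2) := by
      congr 1; funext x; ring
    rw [e2] at e
    have := e.trans d
    have e3 : Real.exp (-(7 * r * (n + 1 : ℕ) + r)) = Real.exp (-(7 * r)) * Real.exp (-(7 * r * n + r)) := by
      rw [← Real.exp_add]; congr 1; push_cast; ring
    rw [e3]
    calc _ = Real.exp (-(7 * r)) * (Fintype.card G * Real.exp (-(7 * r * n + r))) := by ring
      _ ≤ Real.exp (-(7 * r)) * (Real.exp (7 * r) * kmZ ℓ) := by gcongr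
      _ = _ := by rw [← mul_assoc, ← Real.exp_add]; simp
end KM6

open Finset
set_option linter.unusedSectionVars false
set_option linter.unusedVariables false

section KM7
variable {G : Type} [AddCommGroup G] [Fintype G]

lemma km_exp_le {x : ℝ} (h0 : 0 ≤ x) (h1 : x ≤ 1) : Real.exp x ≤ 1 + 2 * x := by
  have := (abs_le.1 (Real.abs_exp_sub_one_le (x := x) (by rwa [abs_of_nonneg h0]))).2
  rw [abs_of_nonneg h0] at this; linarith

lemma km_mom1 {r b : ℝ} {ℓ : G → ℝ} (h : KmIs r b ℓ) (θ ε : ℝ) (h0 : 0 ≤ θ) (h1 : θ ≤ 1 / 2)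
    (hε : 28 * r * θ ≤ ε) (hε1 : ε ≤ 2) (g : G → ℝ)
    (hg : ∀ x, g x ≤ θ * ℓ x) : ∑ x, kmM ℓ x * Real.exp (g x) ≤ 1 + ε := by
  refine (km_mom h θ h0 h1 g hg).trans ?_
  have hr := h.r0
  have : 0 ≤ r * θ := by positivity
  have := km_exp_le (x := 14 * r * θ) (by positivity) (by linarith)
  linarith

lemma km_core1 {f w l : G → ℝ} {α : ℝ} (h : KmW f w l α) (hlen : KmLen l)
    (H : G →+ G) (hH : ∀ t, H t + H t = t)
    (h3 : ∀ x y z, f x = 1 → f y = 1 → f z = 1 → x + z = y + y → x = z)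
    (L : ℕ) (hL : 1 ≤ L) {r b : ℝ} {ℓ : G → ℝ} (hℓ : KmIs r b ℓ) (θ : ℝ) (hθ0 : 0 ≤ θ)
    (hlθ : ∀ t, l t ≤ θ * ℓ t) (hθ : 16000000 * L * (r + 1) * Real.exp L * θ ≤ 1)
    (hβ : Real.exp (-L) / 2 ≤ ∑ u, ∑ v, kmM ℓ u * kmM ℓ v * f (H (u - v)))
    (hW : ∀ x, w x ^ 2 ≤ α ^ 2 / 4) (hα : Real.exp (-(2 * L)) ≤ 1.03 * α ^ 2) :
    ∃ φ : G → ℝ, (∀ s, 0 ≤ φ s) ∧ ∑ s, φ s = 1 ∧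
      (∀ s, φ s ≤ (Real.exp (-(4800 * L ^ 2)))⁻¹ * (kmM ℓ s * Real.exp ((1600 * L : ℕ) * l s))) ∧
      ∑ u, ∑ v, φ u * φ v * (if kmAc (fun x => f x * w x) (u - v) ≤ 1.02 * α ^ 2 then 1 else 0)
        ≤ 1 / 1000 := by
  have hL1 : (1:ℝ) ≤ L := by exact_mod_cast hL
  have hr := hℓ.r0
  have hex : 1 ≤ Real.exp (L:ℝ) := Real.one_le_exp (by positivity)
  have hη0 : ∀ u, 0 ≤ kmM ℓ u := fun u => (kmM_pos ℓ u).le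
  have hinj : ∀ x y : G, x + x = y + y → x = y := by
    intro x y hxy
    have : ∀ z, H (z + z) = z := fun z => by rw [map_add]; exact hH z
    rw [← this x, hxy, this]
  -- numeric facts
  have n0 : 0 ≤ r * θ := by positivity
  have n1 : 16000000 * L * (r * θ + θ) ≤ 1 := by
    have : 0 ≤ 16000000 * L * (r + 1) * θ := by positivity
    nlinarith
  have n2 : 16000000 * (L * (r * θ)) ≤ 1 := by
    have : 0 ≤ (L:ℝ) * θ := by positivity
    nlinarith
  have n3 : 16000000 * (L * θ) ≤ 1 := by
    have : 0 ≤ (L:ℝ) * (r * θ) := by positivity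
    nlinarith
  have n4 : 16000000 * (r * θ) ≤ Real.exp (-L) := by
    rw [Real.exp_neg, inv_eq_one_div, le_div_iff₀ (Real.exp_pos _)]
    have e1 : 0 ≤ (r * θ) * Real.exp L := by positivity
    have e2 : 0 ≤ L * θ * Real.exp L := by positivity
    nlinarith
  have hθL : θ ≤ L * θ := by nlinarith
  have hE : ∑ u, ∑ v, kmM ℓ u * kmM ℓ v * Real.exp (120 * (8 * (200 * L) : ℕ) * l (u - v)) ≤ 2 := by
    have a1 := km_mom1 hℓ (192000 * L * θ) (0.4) (by positivity) (by linarith) (by linarith) (by norm_num)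
      (fun x => 192000 * L * l x) (fun x => by have := hlθ x; have h5 := mul_le_mul_of_nonneg_left this (show (0:ℝ) ≤ 192000 * L by positivity); linarith)
    calc _ ≤ ∑ u, ∑ v, (kmM ℓ u * Real.exp (192000 * L * l u)) * (kmM ℓ v * Real.exp (192000 * L * l v)) := by
          refine Finset.sum_le_sum fun u _ => Finset.sum_le_sum fun v _ => ?_
          rw [mul_mul_mul_comm, ← Real.exp_add]
          refine mul_le_mul_of_nonneg_left (Real.exp_le_exp.2 ?_) (mul_nonneg (hη0 _) (hη0 _))
          push_cast
          have := hlen.sub u v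
          nlinarith
      _ = (∑ x, kmM ℓ x * Real.exp (192000 * L * l x)) ^ 2 := by rw [sq, Finset.sum_mul_sum]
      _ ≤ (1 + 0.4) ^ 2 := by
          refine pow_le_pow_left₀ (Finset.sum_nonneg fun x _ => mul_nonneg (hη0 _) (Real.exp_pos _).le) a1 2
      _ ≤ 2 := by norm_num
  have hl : ∑ u, ∑ v, kmM ℓ u * kmM ℓ v * l (u - v) ≤ (∑ u, ∑ v, kmM ℓ u * kmM ℓ v * f (H (u - v))) / 8 := by
    have a1 := km_mom1 hℓ θ (28 * (r * θ)) hθ0 (by linarith) (by linarith)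
      (by have := Real.exp_le_one_iff.2 (show -(L:ℝ) ≤ 0 by linarith); linarith) l hlθ
    have a2 : ∑ x, kmM ℓ x * l x ≤ 28 * (r * θ) := by
      have : ∑ x, kmM ℓ x * l x ≤ ∑ x, (kmM ℓ x * Real.exp (l x) - kmM ℓ x) :=
        Finset.sum_le_sum fun x _ => by
          have := Real.add_one_le_exp (l x); have := hη0 x; nlinarith
      rw [Finset.sum_sub_distrib, kmM_sum] at this
      linarith
    have a3 : ∑ u, ∑ v, kmM ℓ u * kmM ℓ v * l (u - v) ≤ 2 * ∑ x, kmM ℓ x * l x := by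
      calc _ ≤ ∑ u, ∑ v, ((kmM ℓ u * l u) * kmM ℓ v + kmM ℓ u * (kmM ℓ v * l v)) := by
            refine Finset.sum_le_sum fun u _ => Finset.sum_le_sum fun v _ => ?_
            have := mul_le_mul_of_nonneg_left (hlen.sub u v) (mul_nonneg (hη0 u) (hη0 v))
            linarith
        _ = _ := by
            simp_rw [Finset.sum_add_distrib]
            rw [← Finset.sum_mul_sum, ← Finset.sum_mul_sum, kmM_sum]; ring
    linarith
  have hp : (1 / 2 : ℝ) ^ (200 * L) ≤ ∑ u, ∑ v, kmM ℓ u * kmM ℓ v * f (H (u - v)) := by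
    refine le_trans ?_ hβ
    have e2 : (1 / 2 : ℝ) ^ 2 ≤ Real.exp (-1) := by
      rw [Real.exp_neg, inv_eq_one_div, le_div_iff₀ (Real.exp_pos _)]
      have := Real.exp_one_lt_three; linarith
    have e1 : (1 / 2 : ℝ) ^ (2 * L) ≤ Real.exp (-L) := by
      rw [pow_mul]
      calc _ ≤ Real.exp (-1) ^ L := pow_le_pow_left₀ (by norm_num) e2 L
        _ = _ := by rw [← Real.exp_nat_mul]; congr 1; ring
    calc (1 / 2 : ℝ) ^ (200 * L) ≤ (1 / 2) ^ (2 * L + 1) :=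
          pow_le_pow_of_le_one (by norm_num) (by norm_num) (by omega)
      _ = (1 / 2) ^ (2 * L) / 2 := by rw [pow_succ]; ring
      _ ≤ _ := by linarith
  have m1 := h.threeAP (kmM ℓ) hη0 (200 * L) (by exact ⟨100 * L, by ring⟩) H hH hinj h3 _ rfl hp hW hl
  have m2 := h.moment (kmM ℓ) hη0 (200 * L) ⟨100 * L, by ring⟩ (by omega) hE m1
  rw [show 8 * (200 * L) = 1600 * L by ring] at m2
  refine h.sift (kmM ℓ) hη0 (kmM_sum ℓ) (1600 * L) (by omega) (Real.exp (-(4800 * L ^ 2))) (Real.exp_pos _) ?_ m2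
  have e1 : Real.exp (-(2 * L)) ^ (1600 * L) ≤ (1.03 * α ^ 2) ^ (1600 * L) := by gcongr
  rw [← Real.exp_nat_mul] at e1
  have e2 : Real.exp (-(4800 * L ^ 2 : ℝ)) ≤ Real.exp ((1600 * L : ℕ) * (-(2 * L))) * Real.exp (-2) := by
    rw [← Real.exp_add]; apply Real.exp_le_exp.2; push_cast; nlinarith
  have e3 : Real.exp (-2) ≤ 1 / 4 := by
    rw [Real.exp_neg, inv_eq_one_div, div_le_div_iff_of_pos_left (by norm_num) (Real.exp_pos _) (by norm_num)]
    have := Real.exp_one_gt_d9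
    rw [show (2:ℝ) = 1 + 1 by norm_num, Real.exp_add]; nlinarith
  have e4 := Real.exp_pos ((1600 * L : ℕ) * (-(2 * (L:ℝ))))
  calc _ ≤ Real.exp ((1600 * L : ℕ) * (-(2 * L))) * (1 / 4) := e2.trans (mul_le_mul_of_nonneg_left e3 e4.le)
    _ ≤ _ := by linarith
end KM7

open Finset
set_option linter.unusedSectionVars false
set_option linter.unusedVariables false

section KM8
variable {G : Type} [AddCommGroup G] [Fintype G]

lemma km_tau (L : ℕ) (hL : 1 ≤ L) (k : ℕ) (hk : (k:ℝ) = 10 ^ 15 * L ^ 4) :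
    2 * Real.exp (-(5 * 10 ^ 18 * L ^ 6)) ≤ (Real.exp (-(4800 * L ^ 2)) / 2) ^ k / 8 := by
  have hL1 : (1:ℝ) ≤ L := by exact_mod_cast hL
  have e0 : ∀ x : ℝ, Real.exp (x - 1) ≤ Real.exp x / 2 := fun x => by
    rw [Real.exp_sub]
    have := Real.exp_one_gt_d9
    gcongr; linarith
  obtain ⟨y, hy⟩ : ∃ y : ℝ, y = k * (-(4800 * L ^ 2) - 1) := ⟨_, rfl⟩
  have h1 : Real.exp y ≤ (Real.exp (-(4800 * L ^ 2)) / 2) ^ k := by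
    rw [hy, Real.exp_nat_mul]
    exact pow_le_pow_left₀ (Real.exp_pos _).le (e0 _) _
  have h2 := e0 y
  have h3 := e0 (y - 1)
  have h4 := e0 (y - 1 - 1)
  have h5 := e0 (y - 1 - 1 - 1)
  have h6 : Real.exp (-(5 * 10 ^ 18 * L ^ 6)) ≤ Real.exp (y - 1 - 1 - 1 - 1) := by
    apply Real.exp_le_exp.2
    have a : (L:ℝ) ^ 4 ≤ L ^ 6 := pow_le_pow_right₀ hL1 (by norm_num)
    have b : (1:ℝ) ≤ L ^ 6 := one_le_pow₀ hL1
    have c : (10:ℝ) ^ 15 * L ^ 4 * (-(4800 * L ^ 2) - 1) = - (4800 * 10 ^ 15) * L ^ 6 - 10 ^ 15 * L ^ 4 := by ring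
    rw [hy, hk, c]; linarith
  generalize (Real.exp (-(4800 * (L:ℝ) ^ 2)) / 2) ^ k = X at *
  generalize Real.exp (-(5 * 10 ^ 18 * (L:ℝ) ^ 6)) = E at *
  linarith only [h1, h2, h3, h4, h5, h6]

lemma km_eps (L : ℕ) (hL : 1 ≤ L) (k : ℕ) (hk : (k:ℝ) = 10 ^ 15 * L ^ 4) :
    Real.exp (-(k * (1 / (80000 * L) : ℝ) ^ 2 / 4)) ≤ Real.exp (-(4800 * L ^ 2)) * (1 / (80000 * L)) / 8 := by
  have hL1 : (1:ℝ) ≤ L := by exact_mod_cast hL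
  have hL0 : (0:ℝ) < L := by linarith
  have e1 : -(k * (1 / (80000 * L) : ℝ) ^ 2 / 4) = -(4800 * L ^ 2) - 34262.5 * (L:ℝ) ^ 2 := by
    rw [hk]; field_simp; ring
  rw [e1, Real.exp_sub, div_eq_mul_inv, mul_div_assoc]
  refine mul_le_mul_of_nonneg_left ?_ (Real.exp_pos _).le
  rw [div_div, ← one_div]
  apply one_div_le_one_div_of_le (by positivity)
  have := Real.quadratic_le_exp_of_nonneg (x := 34262.5 * (L:ℝ) ^ 2) (by positivity)
  have h2 : (L:ℝ) ≤ L ^ 2 := by nlinarith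
  have h3 : (L:ℝ) ≤ (L ^ 2) ^ 2 := by nlinarith
  nlinarith

set_option maxHeartbeats 1000000 in
lemma km_core2 {f w l : G → ℝ} {α : ℝ} (h : KmW f w l α) (hlen : KmLen l)
    (L : ℕ) (hL : 1 ≤ L) {r b R : ℝ} {ℓ : G → ℝ} (hℓ : KmIs r b ℓ) (hrR : r + 1 ≤ R)
    (θ : ℝ) (hθ0 : 0 ≤ θ) (hθ1 : θ ≤ 1 / 2) (hθ2 : 28 * r * θ ≤ 1)
    (hlθ : ∀ t, (1600 * L : ℕ) * l t ≤ θ * ℓ t) (hα : Real.exp (-L) ≤ 1.01 * α)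
    (φ : G → ℝ) (hφ : ∀ s, 0 ≤ φ s) (hφ1 : ∑ s, φ s = 1)
    (hφω : ∀ s, φ s ≤ (Real.exp (-(4800 * L ^ 2)))⁻¹ * (kmM ℓ s * Real.exp ((1600 * L : ℕ) * l s)))
    (hbad : ∑ u, ∑ v, φ u * φ v * (if kmAc (fun x => f x * w x) (u - v) ≤ 1.02 * α ^ 2 then 1 else 0)
        ≤ 1 / 1000) (K : ℝ) (hK : K = 10 ^ 24 * R * L ^ 7) :
    ∃ Λ : Finset (AddChar G ℂ), (#Λ : ℝ) ≤ 2 * 10 ^ 20 * L ^ 6 ∧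
      ∀ μ : G → ℝ, (∀ t, 0 ≤ μ t) → ∑ t, μ t = 1 →
        ∑ t, μ t * Real.exp (2 * (K * ℓ t) + ∑ γ ∈ Λ, ‖1 - γ t‖) ≤ 1 + 0.00002 →
        1.014 * α ^ 2 ≤ ∑ x, (kmCr μ (fun x => f x * w x)) x ^ 2 := by
  classical
  have hL1 : (1:ℝ) ≤ L := by exact_mod_cast hL
  have hr := hℓ.r0
  have hαp := h.αpos
  have hll := hℓ.len
  set a : G → ℝ := fun x => f x * w x with ha
  have ha0 : ∀ x, 0 ≤ a x := fun x => mul_nonneg (h.f0 x) (h.wpos x).le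
  obtain ⟨k, hk0, hk⟩ : ∃ k : ℕ, 0 < k ∧ (k:ℝ) = 10 ^ 15 * L ^ 4 := ⟨10 ^ 15 * L ^ 4, by positivity, by push_cast; norm_num⟩
  set T1 : ℝ := 5 * 10 ^ 18 * L ^ 6 with hT1
  set κ : ℝ := Real.exp (-(4800 * L ^ 2)) with hκ
  set τ : ℝ := (κ / 2) ^ k / 8 with hτ
  have hτT : 2 * Real.exp (-T1) ≤ τ := km_tau L hL k hk
  have hτ0 : 0 < τ := lt_of_lt_of_le (by positivity) hτT
  set Y : G → ℝ := fun t => if kmAc a t ≤ 1.02 * α ^ 2 then 0 else 1 with hY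
  have hY0 : ∀ t, 0 ≤ Y t := fun t => by simp only [hY]; split_ifs <;> norm_num
  have hY1 : ∀ t, Y t ≤ 1 := fun t => by simp only [hY]; split_ifs <;> norm_num
  set ω : G → ℝ := fun s => kmM ℓ s * Real.exp ((1600 * L : ℕ) * l s) with hω
  have hω0 : ∀ s, 0 ≤ ω s := fun s => mul_nonneg (kmM_pos _ _).le (Real.exp_pos _).le
  have hω2 : ∑ s, ω s ≤ 2 := by
    have := km_mom1 hℓ θ 1 hθ0 hθ1 hθ2 (by norm_num) _ hlθ
    simp only [hω]; linarith
  set h2 : G → ℝ := fun t => 2 * ℓ t with hh2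
  have H2 : KmLen h2 := (hℓ.smul 2 (by norm_num)).len
  have hωh : ∀ x t, ω (x + t) ≤ Real.exp (h2 t) * ω x := by
    intro x t
    simp only [hω, hh2]
    have e1 := kmM_lip hll x t
    have e2 : Real.exp ((1600 * L : ℕ) * l (x + t)) ≤ Real.exp (ℓ t) * Real.exp ((1600 * L : ℕ) * l x) := by
      rw [← Real.exp_add]; apply Real.exp_le_exp.2
      have a1 := hlθ t
      have a2 := mul_le_mul_of_nonneg_left (hlen.add x t) (show (0:ℝ) ≤ (1600 * L : ℕ) by positivity)
      have a3 := hll.nn t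
      nlinarith
    calc _ ≤ (Real.exp (ℓ t) * kmM ℓ x) * (Real.exp (ℓ t) * Real.exp ((1600 * L : ℕ) * l x)) :=
          mul_le_mul e1 e2 (Real.exp_pos _).le (mul_nonneg (Real.exp_pos _).le (kmM_pos _ _).le)
      _ = _ := by rw [two_mul, Real.exp_add]; ring
  -- the measure
  have hR : 0 < R := by linarith
  have hK0 : 0 < K := by rw [hK]; positivity
  have hℓ3 := hℓ.smul K hK0.le
  set ℓ3 : G → ℝ := fun t => K * ℓ t with hℓ3d
  have hkT : 2 * (k + 2 * (10 * L) * T1) ≤ (1 / (1000 * R)) * K := by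
    have e1 : (1 / (1000 * R)) * K = 10 ^ 21 * L ^ 7 := by rw [hK]; field_simp; norm_num
    have e2 : (L:ℝ) ^ 4 ≤ L ^ 7 := pow_le_pow_right₀ hL1 (by norm_num)
    rw [e1, hk, hT1]
    have e3 : 2 * (10 * (L:ℝ)) * (5 * 10 ^ 18 * L ^ 6) = 10 ^ 20 * L ^ 7 := by ring
    rw [e3]; linarith
  have hT10 : 0 ≤ T1 := by positivity
  have h28 : 28 * r * (1 / (1000 * R)) ≤ 1 := by
    rw [mul_one_div, div_le_one (by positivity)]; linarith
  have hth : 1 / (1000 * R) ≤ 1 / 2 := by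
    apply one_div_le_one_div_of_le (by norm_num); linarith
  have hmom : ∑ t, kmM ℓ3 t * Real.exp ((k + 2 * (10 * L) * T1) * h2 t) ≤ 2 := by
    have := km_mom1 hℓ3 (1 / (1000 * R)) 1 (by positivity) hth h28 (by norm_num)
      (fun t => (k + 2 * (10 * L) * T1) * h2 t) (fun t => by
        simp only [hh2, hℓ3d]
        have := mul_le_mul_of_nonneg_right hkT (hll.nn t)
        linarith)
    linarith
  have hmom2 : ∑ t, kmM ℓ3 t * Real.exp (k * h2 t) ≤ 2 := by
    refine le_trans (Finset.sum_le_sum fun t _ => ?_) hmom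
    refine mul_le_mul_of_nonneg_left (Real.exp_le_exp.2 ?_) (kmM_pos _ _).le
    have := H2.nn t
    have : 0 ≤ 2 * (10 * L) * T1 * h2 t := by positivity
    linarith
  have htail : ∑ t, kmM ℓ3 t * Real.exp (k * h2 t) * (if 1 < 2 * (10 * L : ℕ) * h2 t then 1 else 0) ≤ τ := by
    refine le_trans ?_ hτT
    calc _ ≤ ∑ t, Real.exp (-T1) * (kmM ℓ3 t * Real.exp ((k + 2 * (10 * L) * T1) * h2 t)) := by
          refine Finset.sum_le_sum fun t _ => ?_
          have hm := kmM_pos ℓ3 t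
          split_ifs with hc
          · rw [mul_one, mul_left_comm (Real.exp (-T1))]
            refine mul_le_mul_of_nonneg_left ?_ hm.le
            rw [← Real.exp_add]; apply Real.exp_le_exp.2
            push_cast at hc
            nlinarith
          · rw [mul_zero]; positivity
      _ ≤ _ := by rw [← Finset.mul_sum]; have := Real.exp_pos (-T1); nlinarith
  obtain ⟨T, hT, hJ⟩ := km_almost φ ω h2 Y (kmM ℓ3) H2 hφ hφ1 hω0 hω2 κ (Real.exp_pos _) hφω hωh hY0 hY1
    (fun t => (kmM_pos _ _).le) (kmM_sum _) (10 * L) (by omega) k hk0 (1 / (80000 * L)) (by positivity)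
    (by push_cast; apply le_of_eq; field_simp; norm_num) (km_eps L hL k hk) τ rfl htail
  set σ : G → ℝ := fun t => kmM ℓ3 t * Real.exp (k * h2 t) with hσ
  have hσ0 : ∀ t, 0 ≤ σ t := fun s => mul_nonneg (kmM_pos _ _).le (Real.exp_pos _).le
  have hσl : ∀ x t, σ (x + t) ≤ Real.exp (2 * ℓ3 t) * σ x := by
    intro x t
    simp only [hσ]
    have e1 := kmM_lip hℓ3.len x t
    have e2 : Real.exp (k * h2 (x + t)) ≤ Real.exp (ℓ3 t) * Real.exp (k * h2 x) := by
      rw [← Real.exp_add]; apply Real.exp_le_exp.2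
      have a2 := mul_le_mul_of_nonneg_left (H2.add x t) (show (0:ℝ) ≤ k by positivity)
      have a3 := hll.nn t
      have a4 : 2 * (k:ℝ) ≤ K := by
        have : 1 / (1000 * R) * K ≤ 1 / 2 * K := by gcongr
        have : 0 ≤ 2 * (10 * L) * T1 := by positivity
        linarith
      have a5 : k * h2 t ≤ ℓ3 t := by simp only [hh2, hℓ3d]; nlinarith
      linarith
    calc _ ≤ (Real.exp (ℓ3 t) * kmM ℓ3 x) * (Real.exp (ℓ3 t) * Real.exp (k * h2 x)) :=
          mul_le_mul e1 e2 (Real.exp_pos _).le (mul_nonneg (Real.exp_pos _).le (kmM_pos _ _).le)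
      _ = _ := by rw [two_mul, Real.exp_add]; ring
  set S := ∑ t, σ t * T.indicator 1 t with hS
  have hSp : 0 < S := hτ0.trans_le hT
  set ρ : G → ℝ := fun t => σ t * T.indicator 1 t / S with hρ
  have hin : ∀ t, 0 ≤ T.indicator (1 : G → ℝ) t ∧ T.indicator (1 : G → ℝ) t ≤ 1 := fun t => by
    by_cases ht : t ∈ T <;> simp [ht]
  have hρ0 : ∀ t, 0 ≤ ρ t := fun t => div_nonneg (mul_nonneg (hσ0 t) (hin t).1) hSp.le
  have hρ1 : ∑ t, ρ t = 1 := by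
    simp only [hρ]; rw [← Finset.sum_div]; exact div_self hSp.ne'
  have hρT : ∀ s, s ∉ T → ρ s = 0 := fun s hs => by simp [hρ, hs]
  have hρσ : ∀ s, ρ s ≤ τ⁻¹ * σ s := fun s => by
    simp only [hρ]
    rw [div_eq_mul_inv, mul_comm]
    have e1 : S⁻¹ ≤ τ⁻¹ := by gcongr
    have e2 : σ s * T.indicator 1 s ≤ σ s := by have := hσ0 s; have := (hin s).2; nlinarith
    exact mul_le_mul e1 e2 (mul_nonneg (hσ0 s) (hin s).1) (by positivity)
  have HL3 : KmLen (fun t => 2 * ℓ3 t) := (hℓ3.smul 2 (by norm_num)).len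
  obtain ⟨Λ, hΛ, hspec⟩ := km_chang σ ρ _ HL3 hσ0 hmom2 hσl hρ0 hρ1 τ hτ0 hρσ
  have hYs : ∑ u, ∑ v, φ u * φ v * Y (u - v) ≥ 1 - 1 / 1000 := by
    have e1 : ∑ u, ∑ v, φ u * φ v * Y (u - v) + ∑ u, ∑ v, φ u * φ v * (if kmAc a (u - v) ≤ 1.02 * α ^ 2 then 1 else 0) = 1 := by
      rw [← Finset.sum_add_distrib]
      calc _ = ∑ u, ∑ v, φ u * φ v := by
            refine Finset.sum_congr rfl fun u _ => ?_
            rw [← Finset.sum_add_distrib]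
            refine Finset.sum_congr rfl fun v _ => ?_
            simp only [hY]; split_ifs <;> ring
        _ = 1 := by rw [← Finset.sum_mul_sum, hφ1]; norm_num
    linarith
  have hac : ∀ t, 1.02 * α ^ 2 * Y t ≤ kmAc a t := by
    intro t
    simp only [hY]
    split_ifs with hc
    · rw [mul_zero]; exact Finset.sum_nonneg fun x _ => mul_nonneg (ha0 _) (ha0 _)
    · push Not at hc; linarith
  have hc0 : ∀ z, kmJ T (10 * L) z → 1.017 * α ^ 2 ≤ kmAc (kmCr φ a) z := by
    intro z hz
    have e1 := hJ z hz
    rw [kmAc_cr]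
    have e2 : 1.02 * α ^ 2 * ∑ u, ∑ v, φ u * φ v * Y (u - v + z) ≤ ∑ u, ∑ v, φ u * φ v * kmAc a (u - v + z) := by
      simp_rw [Finset.mul_sum]
      refine Finset.sum_le_sum fun u _ => Finset.sum_le_sum fun v _ => ?_
      have := mul_le_mul_of_nonneg_left (hac (u - v + z)) (mul_nonneg (hφ u) (hφ v))
      linarith
    have : 0 < α ^ 2 := by positivity
    nlinarith
  have hit := km_iter ρ T hρ0 hρ1 hρT _ (kmCr φ a) (10 * L) hc0
  have hA : ∑ x, a x ^ 2 ≤ α := by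
    rw [← h.hα]
    refine le_of_eq (Finset.sum_congr rfl fun x _ => ?_)
    simp only [ha]
    rcases h.f01 x with hx | hx <;> rw [hx] <;> ring
  refine ⟨Λ, hΛ.trans ?_, ?_⟩
  · have : Real.log (2 / τ) ≤ T1 := by
      rw [Real.log_le_iff_le_exp (by positivity), div_le_iff₀ hτ0]
      have e1 : Real.exp T1 * Real.exp (-T1) = 1 := by rw [← Real.exp_add]; simp
      have := mul_le_mul_of_nonneg_left hτT (Real.exp_pos T1).le
      linarith
    have e2 : 32 * T1 ≤ 2 * 10 ^ 20 * L ^ 6 := by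
      rw [hT1]
      have : (0:ℝ) ≤ L ^ 6 := by positivity
      linarith
    linarith
  · intro μ hμ hμ1 hμe
    have hen := km_energy ρ φ a μ hρ0 hρ1 hφ hφ1 hμ hμ1 (10 * L) _ α 0.0005 (by norm_num) (by norm_num) hA hit
      (fun γ hγ => by
        calc ∑ t, μ t * ‖1 - γ t‖ ≤ ∑ t, μ t * (25 * (Real.exp (2 * ℓ3 t + ∑ γ ∈ Λ, ‖1 - γ t‖) - 1)) :=
              Finset.sum_le_sum fun t _ => mul_le_mul_of_nonneg_left (hspec γ hγ t) (hμ t)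
          _ = 25 * (∑ t, μ t * Real.exp (2 * ℓ3 t + ∑ γ ∈ Λ, ‖1 - γ t‖) - ∑ t, μ t) := by
              rw [← Finset.sum_sub_distrib, Finset.mul_sum]
              exact Finset.sum_congr rfl fun t _ => by ring
          _ ≤ _ := by rw [hμ1]; simp only [hℓ3d]; linarith)
    have hsm : (1 / 4 : ℝ) ^ (10 * L) ≤ 0.001 * α := by
      have e1 : (1 / 4 : ℝ) ^ 10 ≤ Real.exp (-1) / 2000 := by
        have e9 : (1 / 3 : ℝ) ≤ Real.exp (-1) := by
          rw [Real.exp_neg, one_div]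
          exact inv_anti₀ (Real.exp_pos _) Real.exp_one_lt_three.le
        norm_num; linarith
      have e2 : (Real.exp (-1) / 2000) ^ L ≤ Real.exp (-L) / 2000 := by
        rw [div_pow, ← Real.exp_nat_mul]
        have : (2000:ℝ) ^ 1 ≤ 2000 ^ L := pow_le_pow_right₀ (by norm_num) hL
        rw [pow_one] at this
        have e3 : (L:ℝ) * -1 = -L := by ring
        rw [e3]; gcongr
      rw [pow_mul]
      calc _ ≤ (Real.exp (-1) / 2000) ^ L := pow_le_pow_left₀ (by positivity) e1 L
        _ ≤ _ := e2
        _ ≤ _ := by linarith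
    refine le_trans ?_ hen
    generalize (1 / 4 : ℝ) ^ (10 * L) = q at *
    have : q * α ≤ 0.001 * α ^ 2 := by
      have := mul_le_mul_of_nonneg_right hsm hαp.le
      linarith only [this]
    have h9 : 0 < α ^ 2 := by positivity
    generalize q * α = z at *
    generalize α ^ 2 = z' at *
    linarith only [this, h9]
end KM8

open Finset
set_option linter.unusedSectionVars false
set_option linter.unusedVariables false

section KM9
variable {G : Type} [AddCommGroup G] [Fintype G]

lemma km_avg {ι : Type} [Fintype ι] {ℓ : G → ℝ} (hℓ : KmLen ℓ) (f : G → ℝ) (hf : ∀ x, 0 ≤ f x) (x0 : G)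
    (ν : ι → ℝ) (hν : ∀ j, 0 ≤ ν j) (hν1 : ∑ j, ν j = 1) (s : ι → G) (ε : ℝ)
    (he : ∑ j, ν j * Real.exp (ℓ (s j)) ≤ 1 + ε) :
    (1 - ε) * kmCr (kmM ℓ) f x0 ≤ ∑ x, kmM ℓ x * ∑ j, ν j * f (x0 + x + s j) := by
  have hD : 0 ≤ kmCr (kmM ℓ) f x0 := Finset.sum_nonneg fun x _ => mul_nonneg (kmM_pos _ _).le (hf _)
  have e1 : ∀ j, Real.exp (-ℓ (s j)) * kmCr (kmM ℓ) f x0 ≤ ∑ x, kmM ℓ x * f (x0 + x + s j) := by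
    intro j
    rw [kmCr, Finset.mul_sum]
    rw [← Equiv.sum_comp (Equiv.addRight (s j))]
    refine Finset.sum_le_sum fun x _ => ?_
    simp only [Equiv.coe_addRight]
    rw [← add_assoc, ← mul_assoc]
    refine mul_le_mul_of_nonneg_right ?_ (hf _)
    have := mul_le_mul_of_nonneg_left (kmM_lip hℓ x (s j)) (Real.exp_pos (-ℓ (s j))).le
    rwa [← mul_assoc, ← Real.exp_add, neg_add_cancel, Real.exp_zero, one_mul] at this
  calc (1 - ε) * kmCr (kmM ℓ) f x0 ≤ (∑ j, ν j * Real.exp (-ℓ (s j))) * kmCr (kmM ℓ) f x0 := by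
        refine mul_le_mul_of_nonneg_right ?_ hD
        have : ∑ j, (2 * ν j - ν j * Real.exp (ℓ (s j))) ≤ ∑ j, ν j * Real.exp (-ℓ (s j)) := by
          refine Finset.sum_le_sum fun j _ => ?_
          have h1 : 2 - Real.exp (ℓ (s j)) ≤ Real.exp (-ℓ (s j)) := by
            have p := Real.exp_pos (ℓ (s j))
            rw [Real.exp_neg, inv_eq_one_div, le_div_iff₀ p]
            nlinarith [sq_nonneg (Real.exp (ℓ (s j)) - 1)]
          have := mul_le_mul_of_nonneg_left h1 (hν j)
          linarith
        rw [Finset.sum_sub_distrib, ← Finset.mul_sum, hν1] at this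
        linarith
    _ = ∑ j, ν j * (Real.exp (-ℓ (s j)) * kmCr (kmM ℓ) f x0) := by
        rw [Finset.sum_mul]; exact Finset.sum_congr rfl fun j _ => by ring
    _ ≤ ∑ j, ν j * ∑ x, kmM ℓ x * f (x0 + x + s j) :=
        Finset.sum_le_sum fun j _ => mul_le_mul_of_nonneg_left (e1 j) (hν j)
    _ = _ := by
        simp_rw [Finset.mul_sum]; rw [Finset.sum_comm]
        exact Finset.sum_congr rfl fun x _ => Finset.sum_congr rfl fun j _ => by ring

lemma km_scale {r b : ℝ} {ℓ : G → ℝ} (hℓ : KmIs r b ℓ) (K ε : ℝ) (hK : 2 ≤ K) (h : 28 * r ≤ ε * K) (hε : ε ≤ 2) :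
    ∑ x, kmM (fun t => K * ℓ t) x * Real.exp (ℓ x) ≤ 1 + ε := by
  have hK0 : 0 < K := by linarith
  refine km_mom1 (hℓ.smul K hK0.le) (1 / K) ε (by positivity) (one_div_le_one_div_of_le (by norm_num) hK) ?_ hε _ ?_
  · rw [mul_one_div, div_le_iff₀ hK0]; exact h
  · intro x; apply le_of_eq; field_simp

/-- choose a good translate -/
lemma km_pick {r b : ℝ} {ℓ : G → ℝ} (hℓ : KmIs r b ℓ) (f : G → ℝ) (hf : ∀ x, 0 ≤ f x) (x0 : G) (K1 K2 α : ℝ)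
    (h1 : 2 ≤ K1) (h1' : 56000 * r ≤ K1) (h2 : 2 ≤ K2) (h2' : 140000 * r ≤ K2)
    (hα : kmCr (kmM ℓ) f x0 = α)
    (n1 : ∀ x, kmCr (kmM (fun t => K1 * ℓ t)) f x ≤ 1.0005 * α)
    (n2 : ∀ x, kmCr (kmM (fun t => K2 * ℓ t)) f x ≤ 1.0005 * α) :
    ∃ X, 0.9985 * α ≤ kmCr (kmM (fun t => K1 * ℓ t)) f X ∧
      0.9985 * α ≤ ∑ s, ∑ t, kmM (fun t => K2 * ℓ t) s * kmM (fun t => K2 * ℓ t) t * f (X + (s - t)) := by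
  set μ1 := kmM (fun t => K1 * ℓ t) with hμ1
  set μ2 := kmM (fun t => K2 * ℓ t) with hμ2
  have p1 : ∀ t, 0 ≤ μ1 t := fun t => (kmM_pos _ _).le
  have p2 : ∀ t, 0 ≤ μ2 t := fun t => (kmM_pos _ _).le
  have s1 : ∑ t, μ1 t = 1 := kmM_sum _
  have s2 : ∑ t, μ2 t = 1 := kmM_sum _
  have a1 := km_avg hℓ.len f hf x0 μ1 p1 s1 id 0.0005 (km_scale hℓ K1 0.0005 h1 (by linarith) (by norm_num))
  have hs := km_scale hℓ K2 0.0002 h2 (by linarith) (by norm_num)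
  have a2 := km_avg hℓ.len f hf x0 (fun p : G × G => μ2 p.1 * μ2 p.2) (fun p => mul_nonneg (p2 _) (p2 _))
    (by rw [Fintype.sum_prod_type]; simp only []; rw [← Finset.sum_mul_sum, s2, one_mul]) (fun p => p.1 - p.2) 0.0005
    (by
      rw [Fintype.sum_prod_type]
      calc _ ≤ ∑ s, ∑ t, (μ2 s * Real.exp (ℓ s)) * (μ2 t * Real.exp (ℓ t)) := by
            refine Finset.sum_le_sum fun s _ => Finset.sum_le_sum fun t _ => ?_
            rw [mul_mul_mul_comm, ← Real.exp_add]
            exact mul_le_mul_of_nonneg_left (Real.exp_le_exp.2 (hℓ.len.sub s t)) (mul_nonneg (p2 _) (p2 _))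
        _ = (∑ x, μ2 x * Real.exp (ℓ x)) ^ 2 := by rw [sq, Finset.sum_mul_sum]
        _ ≤ (1 + 0.0002) ^ 2 := pow_le_pow_left₀ (Finset.sum_nonneg fun x _ => mul_nonneg (p2 x) (Real.exp_pos _).le) hs 2
        _ ≤ _ := by norm_num)
  rw [hα] at a1 a2
  set g1 : G → ℝ := fun x => kmCr μ1 f (x0 + x) with hg1
  set g2 : G → ℝ := fun x => ∑ s, ∑ t, μ2 s * μ2 t * f (x0 + x + (s - t)) with hg2
  have b1 : (1 - 0.0005) * α ≤ ∑ x, kmM ℓ x * g1 x := a1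
  have b2 : (1 - 0.0005) * α ≤ ∑ x, kmM ℓ x * g2 x := by
    refine a2.trans (le_of_eq (Finset.sum_congr rfl fun x _ => ?_))
    rw [Fintype.sum_prod_type]
  have c1 : ∀ x, g1 x ≤ 1.0005 * α := fun x => n1 _
  have c2 : ∀ x, g2 x ≤ 1.0005 * α := by
    intro x
    have : g2 x = ∑ t, μ2 t * kmCr μ2 f (x0 + x - t) := by
      simp only [hg2, kmCr]
      rw [Finset.sum_comm]
      refine Finset.sum_congr rfl fun t _ => ?_
      rw [Finset.mul_sum]
      refine Finset.sum_congr rfl fun s _ => ?_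
      rw [show x0 + x + (s - t) = x0 + x - t + s by abel]; ring
    rw [this]
    calc _ ≤ ∑ t, μ2 t * (1.0005 * α) := Finset.sum_le_sum fun t _ => mul_le_mul_of_nonneg_left (n2 _) (p2 t)
      _ = _ := by rw [← Finset.sum_mul, s2, one_mul]
  obtain ⟨x, hx⟩ : ∃ x, 2 * ((1 - 0.0005) * α) ≤ g1 x + g2 x := by
    by_contra hcon
    push Not at hcon
    have : ∑ x, kmM ℓ x * (g1 x + g2 x) < ∑ x, kmM ℓ x * (2 * ((1 - 0.0005) * α)) :=
      Finset.sum_lt_sum_of_nonempty ⟨0, mem_univ _⟩ fun x _ => mul_lt_mul_of_pos_left (hcon x) (kmM_pos _ _)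
    simp_rw [mul_add, Finset.sum_add_distrib] at this
    rw [← Finset.sum_mul, kmM_sum] at this
    linarith
  refine ⟨x0 + x, ?_, ?_⟩
  · have := c2 x
    change 0.9985 * α ≤ g1 x
    linarith
  · have := c1 x
    change 0.9985 * α ≤ g2 x
    linarith
end KM9

open Finset
set_option linter.unusedSectionVars false
set_option linter.unusedVariables false

section KM10
variable {G : Type} [AddCommGroup G] [Fintype G]

lemma km_half (H : G →+ G) (hH : ∀ t, H t + H t = t) (ℓ : G → ℝ) (u : G) :
    kmM (fun t => ℓ (H t)) u = kmM ℓ (H u) := by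
  have hb : Function.Bijective H := by
    refine Function.Injective.bijective_of_finite fun x y hxy => ?_
    rw [← hH x, ← hH y, hxy]
  unfold kmM
  congr 1
  exact Function.Bijective.sum_comp hb (fun x => Real.exp (-ℓ x))

set_option maxHeartbeats 1000000 in
lemma km_step (f : G → ℝ) (f01 : ∀ x, f x = 0 ∨ f x = 1) (H : G →+ G) (hH : ∀ t, H t + H t = t)
    (h3 : ∀ x y z, f x = 1 → f y = 1 → f z = 1 → x + z = y + y → x = z)
    (L : ℕ) (hL : 1 ≤ L) {r b : ℝ} {ℓ : G → ℝ} (hℓ : KmIs r b ℓ) (hb : 0 ≤ b) (x0 : G) (α : ℝ)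
    (hα : kmCr (kmM ℓ) f x0 = α) (hαL : Real.exp (-L) ≤ α) (M R K1 K2 K K4 b' : ℝ)
    (hM : M = 2 * 10 ^ 20 * L ^ 6) (hR : r + M + 1 ≤ R) (hK1 : K1 = 56000 * R)
    (hK2 : K2 = 16000000 * L * R * Real.exp L * K1) (hK : K = 10 ^ 24 * R * L ^ 7)
    (hK4 : K4 = 2 * 10 ^ 6 * R * Real.exp L) (hb' : b' = K4 * (2 * K * K2 + 1) * (b + 1))
    (hZ : ∀ ℓ' : G → ℝ, KmIs R b' ℓ' → 16 * Real.exp (2 * L) ≤ kmZ ℓ')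
    (hNI : ∀ (ℓ' : G → ℝ) x, KmIs (r + M) b' ℓ' → kmCr (kmM ℓ') f x ≤ 1.0005 * α) : False := by
  have hL1 : (1:ℝ) ≤ L := by exact_mod_cast hL
  have hr := hℓ.r0
  have hM1 : 1 ≤ M := by rw [hM]; have : (1:ℝ) ≤ L ^ 6 := one_le_pow₀ hL1; linarith
  have hR1 : 1 ≤ R := by linarith
  have hE : 1 ≤ Real.exp (L:ℝ) := Real.one_le_exp (by positivity)
  have hαp : 0 < α := (Real.exp_pos _).trans_le hαL
  have hK1' : 56000 ≤ K1 := by rw [hK1]; linarith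
  have q1 : 16000000 * R ≤ 16000000 * L * R * Real.exp L := by
    have a1 : 1 ≤ (L:ℝ) * Real.exp L := one_le_mul_of_one_le_of_one_le hL1 hE
    nlinarith only [a1, hR1]
  have hK2K1 : 16000000 * R * K1 ≤ K2 := by rw [hK2]; exact mul_le_mul_of_nonneg_right q1 (by linarith)
  have hK21 : K1 ≤ K2 := by nlinarith only [hK2K1, hR1, hK1']
  have hK2R : 140000 * R ≤ K2 := by
    nlinarith only [hK2K1, hR1, hK1']
  have hK' : 1 ≤ K := by
    rw [hK]; have : (1:ℝ) ≤ L ^ 7 := one_le_pow₀ hL1; nlinarith only [this, hR1]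
  have hK4' : 2 * 10 ^ 6 * R ≤ K4 := by rw [hK4]; nlinarith only [hE, hR1]
  have hK41 : 1 ≤ K4 := by linarith
  have hK20 : 0 < K2 := by linarith
  have w0 : K2 ≤ 2 * K * K2 + 1 := by nlinarith only [hK', hK20]
  have w1 : K2 * b ≤ b' := by
    rw [hb']
    have : K2 ≤ K4 * (2 * K * K2 + 1) := by nlinarith only [w0, hK20, hK41]
    have h5 : 0 ≤ K4 * (2 * K * K2 + 1) := by linarith
    nlinarith only [this, h5, hb]
  have w2 : K1 * b ≤ b' := by nlinarith only [w1, hK21, hb]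
  have w3 : K4 * (2 * (K * (K2 * b)) + 1) ≤ b' := by
    rw [hb', mul_assoc]
    refine mul_le_mul_of_nonneg_left ?_ (by linarith)
    have : 0 ≤ K * K2 := by positivity
    nlinarith only [this, hb]
  have f0 : ∀ x, 0 ≤ f x := fun x => by rcases f01 x with h | h <;> rw [h]; norm_num
  have f1 : ∀ x, f x ≤ 1 := fun x => by rcases f01 x with h | h <;> rw [h]; norm_num
  have i1 : KmIs r (K1 * b) (fun t => K1 * ℓ t) := hℓ.smul K1 (by linarith)
  have i2 : KmIs r (K2 * b) (fun t => K2 * ℓ t) := hℓ.smul K2 (by linarith)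
  obtain ⟨X, hX1, hX2⟩ := km_pick hℓ f f0 x0 K1 K2 α (by linarith) (by rw [hK1]; linarith) (by linarith)
    (by linarith) hα (fun x => hNI _ x (i1.mono (by linarith) w2)) (fun x => hNI _ x (i2.mono (by linarith) w1))
  set F : G → ℝ := fun y => f (X + y) with hF
  set α1 := kmCr (kmM (fun t => K1 * ℓ t)) f X with hα1
  set w : G → ℝ := fun x => Real.sqrt (kmM (fun t => K1 * ℓ t) x) with hw
  have wsq : ∀ x, w x ^ 2 = kmM (fun t => K1 * ℓ t) x := fun x => Real.sq_sqrt (kmM_pos _ _).le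
  set l : G → ℝ := fun t => K1 / 2 * ℓ t with hl
  have hlen : KmLen l := (hℓ.smul (K1 / 2) (by linarith)).len
  have hα1p : 0 < α1 := by linarith
  have hW : KmW F w l α1 := by
    constructor
    · exact fun x => f01 _
    · exact fun x => Real.sqrt_pos.2 (kmM_pos _ _)
    · intro x; simp only [hw, kmM]; rw [hℓ.len.sym]
    · simp_rw [wsq]; exact kmM_sum _
    · exact hlen.nn
    · exact hlen.sym
    · intro x t
      refine Real.sqrt_le_iff.2 ⟨mul_nonneg (Real.exp_pos _).le (Real.sqrt_nonneg _), ?_⟩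
      rw [mul_pow, wsq, sq, ← Real.exp_add]
      have := kmM_lip i1.len x t
      have e : l t + l t = K1 * ℓ t := by simp only [hl]; ring
      rwa [e]
    · simp_rw [wsq]
      exact Finset.sum_congr rfl fun x _ => by simp only [hF]; ring
    · exact hα1p
  have h3F : ∀ x y z, F x = 1 → F y = 1 → F z = 1 → x + z = y + y → x = z := by
    intro x y z hx hy hz hxyz
    have := h3 _ _ _ hx hy hz (by rw [add_add_add_comm, hxyz, add_add_add_comm])
    exact add_left_cancel this
  have iH := hℓ.comp H
  have i2H : KmIs r (K2 * b) (fun t => K2 * ℓ (H t)) := iH.smul K2 (by linarith)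
  set ℓ2 : G → ℝ := fun t => K2 * ℓ (H t) with hℓ2
  have hM2 : ∀ u, kmM ℓ2 u = kmM (fun t => K2 * ℓ t) (H u) := fun u => km_half H hH (fun t => K2 * ℓ t) u
  have hbij : Function.Bijective H := by
    refine Function.Injective.bijective_of_finite fun x y hxy => ?_
    rw [← hH x, ← hH y, hxy]
  have hlθ : ∀ t, l t ≤ K1 / K2 * ℓ2 t := by
    intro t
    have e1 := hℓ.len.add (H t) (H t)
    rw [hH] at e1
    have : K1 / K2 * ℓ2 t = K1 * ℓ (H t) := by simp only [hℓ2]; field_simp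
    rw [this]; simp only [hl]; nlinarith only [e1, hK1']
  have hβ : Real.exp (-L) / 2 ≤ ∑ u, ∑ v, kmM ℓ2 u * kmM ℓ2 v * F (H (u - v)) := by
    have : ∑ u, ∑ v, kmM ℓ2 u * kmM ℓ2 v * F (H (u - v)) = ∑ s, ∑ t, kmM (fun t => K2 * ℓ t) s * kmM (fun t => K2 * ℓ t) t * f (X + (s - t)) := by
      refine Eq.trans ?_ (Function.Bijective.sum_comp hbij _)
      refine Finset.sum_congr rfl fun u _ => ?_
      refine Eq.trans ?_ (Function.Bijective.sum_comp hbij _)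
      refine Finset.sum_congr rfl fun v _ => ?_
      rw [hM2, hM2, map_sub]
    rw [this]; linarith
  have hEE : Real.exp (-(2 * L)) = Real.exp (-(L:ℝ)) ^ 2 := by rw [sq, ← Real.exp_add]; congr 1; ring
  have hα1L : Real.exp (-L) ≤ 1.01 * α1 := by linarith
  have hEp := Real.exp_pos (-(L:ℝ))
  have hsqα : Real.exp (-(2 * L)) ≤ 1.03 * α1 ^ 2 := by
    rw [hEE]
    have := pow_le_pow_left₀ hEp.le hα1L 2
    nlinarith only [this, sq_nonneg α1]
  have hWb : ∀ x, w x ^ 2 ≤ α1 ^ 2 / 4 := by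
    intro x
    rw [wsq]
    refine (kmM_le i1.len x).trans ?_
    have z := hZ _ (i1.mono (by linarith) w2)
    have : 1 / kmZ (fun t => K1 * ℓ t) ≤ 1 / (16 * Real.exp (2 * L)) := one_div_le_one_div_of_le (by positivity) z
    refine this.trans ?_
    have e : 1 / (16 * Real.exp (2 * (L:ℝ))) = Real.exp (-(2 * L)) / 16 := by
      rw [Real.exp_neg]; field_simp
    rw [e]; nlinarith only [hsqα, sq_nonneg α1]
  have hθ : K1 / K2 * (16000000 * L * R * Real.exp L) = 1 := by
    have : 16000000 * L * R * Real.exp L * K1 ≠ 0 := by rw [← hK2]; exact hK20.ne'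
    rw [hK2]; field_simp
  have hθ0 : 0 ≤ K1 / K2 := by positivity
  obtain ⟨φ, hφ, hφ1, hφω, hbad⟩ := km_core1 hW hlen H hH h3F L hL i2H (K1 / K2) hθ0 hlθ
    (by
      refine le_trans (le_of_eq (mul_comm _ _)) (le_trans ?_ hθ.le)
      refine mul_le_mul_of_nonneg_left ?_ hθ0
      have : 0 ≤ L * Real.exp L := by positivity
      nlinarith only [this, hR, hM1]) hβ hWb hsqα
  have hLR : 16000000 * (L * (K1 / K2)) * R ≤ 1 := by
    rw [← hθ]
    have : 0 ≤ K1 / K2 * L * R := by positivity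
    nlinarith only [this, hE]
  have hLθ : 0 ≤ L * (K1 / K2) := by positivity
  obtain ⟨Λ, hΛ, hfin⟩ := km_core2 hW hlen L hL i2H (by linarith : r + 1 ≤ R) (1600 * (L * (K1 / K2))) (by positivity)
    (by nlinarith only [hLR, hLθ, hR1]) (by nlinarith only [hLR, hLθ, hR, hM1, hr]) (fun t => by
      push_cast
      have := mul_le_mul_of_nonneg_left (hlθ t) (show (0:ℝ) ≤ 1600 * L by positivity)
      linarith) hα1L φ hφ hφ1 hφω hbad K hK
  rw [← hM] at hΛ
  -- the new measure
  set g : G → ℝ := fun t => 2 * (K * ℓ2 t) + ∑ γ ∈ Λ, ‖1 - γ t‖ with hg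
  have ig : KmIs (r + M) (2 * (K * (K2 * b)) + 1) g := by
    have hn : 0 ≤ 2 * (K * (K2 * b)) := by positivity
    have j1 := ((i2H.smul K (by linarith)).smul 2 (by norm_num)).mono le_rfl (by linarith : _ ≤ 2 * (K * (K2 * b)) + 1)
    have j2 := (KmIs.finset Λ).mono hΛ (by linarith : (1:ℝ) ≤ 2 * (K * (K2 * b)) + 1)
    exact j1.add j2
  have ign : KmIs (r + M) b' (fun t => K4 * g t) := (ig.smul K4 (by linarith)).mono le_rfl w3
  set μn := kmM (fun t => K4 * g t) with hμn
  have pn : ∀ t, 0 ≤ μn t := fun t => (kmM_pos _ _).le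
  have sn : ∑ t, μn t = 1 := kmM_sum _
  have r1 : ∑ x, μn x * Real.exp (g x) ≤ 1 + 0.00002 :=
    km_scale ig K4 0.00002 (by linarith) (by linarith) (by norm_num)
  have hEi : Real.exp L * Real.exp (-(L:ℝ)) = 1 := by rw [← Real.exp_add]; simp
  have r2 : ∑ x, μn x * Real.exp (g x) ≤ 1 + Real.exp (-L) / 2000 := by
    refine km_scale ig K4 _ (by linarith) ?_ ?_
    · rw [hK4, show Real.exp (-(L:ℝ)) / 2000 * (2 * 10 ^ 6 * R * Real.exp L) = 1000 * R * (Real.exp L * Real.exp (-(L:ℝ))) by ring, hEi]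
      linarith
    · have : Real.exp (-(L:ℝ)) ≤ 1 := Real.exp_le_one_iff.2 (by linarith)
      linarith
  have hlow := hfin μn pn sn r1
  have hlg : ∀ t, l t ≤ g t := by
    intro t
    have e1 := hlθ t
    have e2 : K1 / K2 ≤ 1 := (div_le_one hK20).2 hK21
    have e3 := i2H.len.nn t
    have e4 : 0 ≤ ∑ γ ∈ Λ, ‖1 - γ t‖ := Finset.sum_nonneg fun _ _ => norm_nonneg _
    simp only [hg]
    nlinarith only [e1, e2, e3, e4, hK']
  have hup : ∀ y, kmCr μn (fun x => F x * w x) y ≤ w y * (1.001 * α) := by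
    intro y
    have wy := hW.wpos y
    calc kmCr μn (fun x => F x * w x) y ≤ ∑ t, w y * (μn t * f (X + y + t) + (μn t * Real.exp (g t) - μn t)) := by
          refine Finset.sum_le_sum fun t _ => ?_
          have e1 := hW.wl y t
          have e2 : Real.exp (l t) ≤ Real.exp (g t) := Real.exp_le_exp.2 (hlg t)
          have e3 : 1 ≤ Real.exp (g t) := Real.one_le_exp ((hlen.nn t).trans (hlg t))
          have e4 : w (y + t) ≤ w y * Real.exp (g t) := e1.trans (by rw [mul_comm]; exact mul_le_mul_of_nonneg_left e2 wy.le)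
          have e5 : F (y + t) = f (X + y + t) := by simp only [hF, add_assoc]
          change μn t * (F (y + t) * w (y + t)) ≤ _
          rw [e5]
          have e6 := f0 (X + y + t)
          have e7 := f1 (X + y + t)
          have e8 := pn t
          calc μn t * (f (X + y + t) * w (y + t)) ≤ μn t * (f (X + y + t) * (w y * Real.exp (g t))) := by gcongr
            _ = w y * μn t * (f (X + y + t) + f (X + y + t) * (Real.exp (g t) - 1)) := by ring
            _ ≤ w y * μn t * (f (X + y + t) + 1 * (Real.exp (g t) - 1)) := by
                have := sub_nonneg.2 e3
                gcongr
            _ = _ := by ring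
      _ = w y * (kmCr μn f (X + y) + (∑ t, μn t * Real.exp (g t) - ∑ t, μn t)) := by
          rw [← Finset.mul_sum, Finset.sum_add_distrib, Finset.sum_sub_distrib]; rfl
      _ ≤ _ := by
          refine mul_le_mul_of_nonneg_left ?_ wy.le
          have := hNI _ (X + y) ign
          rw [sn]; linarith
  have hup2 : ∑ x, kmCr μn (fun x => F x * w x) x ^ 2 ≤ (1.001 * α) ^ 2 := by
    calc _ ≤ ∑ x, (w x * (1.001 * α)) ^ 2 := by
          refine Finset.sum_le_sum fun x _ => pow_le_pow_left₀ ?_ (hup x) 2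
          exact Finset.sum_nonneg fun t _ => mul_nonneg (pn t) (mul_nonneg (f0 _) (hW.wpos _).le)
      _ = _ := by simp_rw [mul_pow (w _)]; rw [← Finset.sum_mul, hW.wsum, one_mul]
  have : (0.9985 * α) ^ 2 ≤ α1 ^ 2 := pow_le_pow_left₀ (by linarith) hX1 2
  have h8 : 0 < α ^ 2 := by positivity
  nlinarith only [this, h8, hup2, hlow]
end KM10

open Finset
set_option linter.unusedSectionVars false
set_option linter.unusedVariables false

section KM11
variable {G : Type} [AddCommGroup G] [Fintype G]

lemma km_ten : (10:ℝ) ≤ Real.exp 3 := by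
  have h := Real.exp_one_gt_d9
  have : Real.exp 3 = Real.exp 1 ^ 3 := by rw [← Real.exp_nat_mul]; norm_num
  rw [this]
  calc (10:ℝ) ≤ 2.7 ^ 3 := by norm_num
    _ ≤ _ := by gcongr; linarith

lemma km_Q (L : ℕ) (hL : 1 ≤ L) (R K1 K2 K K4 : ℝ) (hR : R = 10 ^ 24 * L ^ 7) (hK1 : K1 = 56000 * R)
    (hK2 : K2 = 16000000 * L * R * Real.exp L * K1) (hK : K = 10 ^ 24 * R * L ^ 7)
    (hK4 : K4 = 2 * 10 ^ 6 * R * Real.exp L) :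
    1 ≤ K4 * (2 * K * K2 + 1) ∧ 2 * (K4 * (2 * K * K2 + 1)) ≤ Real.exp (460 * L) := by
  have hL1 : (1:ℝ) ≤ L := by exact_mod_cast hL
  obtain ⟨E, hE⟩ : ∃ E, E = Real.exp (L:ℝ) := ⟨_, rfl⟩
  have hLE : (L:ℝ) ≤ E := by rw [hE]; have := Real.add_one_le_exp (L:ℝ); linarith
  have hE1 : 1 ≤ E := by linarith
  rw [← hE] at hK2 hK4
  have bR : R ≤ 10 ^ 24 * E ^ 7 := by rw [hR]; gcongr
  have hR0 : 1 ≤ R := by rw [hR]; have : (1:ℝ) ≤ L ^ 7 := one_le_pow₀ hL1; linarith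
  have bK4 : K4 ≤ 2 * 10 ^ 30 * E ^ 8 := by
    calc K4 ≤ 2 * 10 ^ 6 * (10 ^ 24 * E ^ 7) * E := by rw [hK4]; gcongr
      _ = _ := by ring
  have bK : K ≤ 10 ^ 48 * E ^ 14 := by
    calc K ≤ 10 ^ 24 * (10 ^ 24 * E ^ 7) * E ^ 7 := by rw [hK]; gcongr
      _ = _ := by ring
  have bK1 : K1 ≤ 56 * 10 ^ 27 * E ^ 7 := by rw [hK1]; linarith
  have hK10 : 0 ≤ K1 := by rw [hK1]; linarith
  have bK2 : K2 ≤ 10 ^ 60 * E ^ 16 := by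
    calc K2 ≤ 16000000 * E * (10 ^ 24 * E ^ 7) * E * (56 * 10 ^ 27 * E ^ 7) := by rw [hK2]; gcongr
      _ = (16 * 56) * 10 ^ 57 * E ^ 16 := by ring
      _ ≤ _ := by have : 0 ≤ E ^ 16 := by positivity
                  linarith
  have hK40 : 1 ≤ K4 := by rw [hK4]; nlinarith only [hR0, hE1]
  have hK0 : 0 ≤ K := by rw [hK]; positivity
  have hK20 : 0 ≤ K2 := by rw [hK2]; positivity
  have b1 : 2 * K * K2 + 1 ≤ 3 * 10 ^ 108 * E ^ 30 := by
    calc 2 * K * K2 + 1 ≤ 2 * (10 ^ 48 * E ^ 14) * (10 ^ 60 * E ^ 16) + 1 := by gcongr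
      _ = 2 * 10 ^ 108 * E ^ 30 + 1 := by ring
      _ ≤ _ := by have : 1 ≤ E ^ 30 := one_le_pow₀ hE1
                  linarith
  constructor
  · have : 0 ≤ K * K2 := by positivity
    nlinarith only [this, hK40]
  · calc 2 * (K4 * (2 * K * K2 + 1)) ≤ 2 * ((2 * 10 ^ 30 * E ^ 8) * (3 * 10 ^ 108 * E ^ 30)) := by gcongr
      _ = 12 * 10 ^ 138 * E ^ 38 := by ring
      _ ≤ 10 ^ 139 * E ^ 38 * 10 := by
          have : 0 ≤ E ^ 38 := by positivity
          linarith
      _ = 10 ^ 140 * E ^ 38 := by ring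
      _ ≤ Real.exp 3 ^ 140 * Real.exp L ^ 38 := by
          rw [hE]; have := km_ten; gcongr
      _ ≤ _ := by
          rw [← Real.exp_nat_mul, ← Real.exp_nat_mul, ← Real.exp_add]
          apply Real.exp_le_exp.2
          push_cast; linarith

lemma km_iterate (f : G → ℝ) (f01 : ∀ x, f x = 0 ∨ f x = 1) (H : G →+ G) (hH : ∀ t, H t + H t = t)
    (h3 : ∀ x y z, f x = 1 → f y = 1 → f z = 1 → x + z = y + y → x = z)
    (L : ℕ) (hL : 1 ≤ L) (hd : Real.exp (-L) * Fintype.card G ≤ ∑ x, f x)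
    (hG : Real.exp (10 ^ 32 * L ^ 9) ≤ Fintype.card G) : False := by
  have hL1 : (1:ℝ) ≤ L := by exact_mod_cast hL
  have f1 : ∀ x, f x ≤ 1 := fun x => by rcases f01 x with h | h <;> rw [h]; norm_num
  obtain ⟨M, hM⟩ : ∃ M : ℝ, M = 2 * 10 ^ 20 * L ^ 6 := ⟨_, rfl⟩
  obtain ⟨R, hR⟩ : ∃ M : ℝ, M = 10 ^ 24 * L ^ 7 := ⟨_, rfl⟩
  obtain ⟨K1, hK1⟩ : ∃ M : ℝ, M = 56000 * R := ⟨_, rfl⟩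
  obtain ⟨K2, hK2⟩ : ∃ M : ℝ, M = 16000000 * L * R * Real.exp L * K1 := ⟨_, rfl⟩
  obtain ⟨K, hK⟩ : ∃ M : ℝ, M = 10 ^ 24 * R * L ^ 7 := ⟨_, rfl⟩
  obtain ⟨K4, hK4⟩ : ∃ M : ℝ, M = 2 * 10 ^ 6 * R * Real.exp L := ⟨_, rfl⟩
  obtain ⟨hQ1, hQ2⟩ := km_Q L hL R K1 K2 K K4 hR hK1 hK2 hK hK4
  obtain ⟨Q, hQ⟩ : ∃ M : ℝ, M = K4 * (2 * K * K2 + 1) := ⟨_, rfl⟩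
  rw [← hQ] at hQ1 hQ2
  have hZ : ∀ ℓ' : G → ℝ, KmIs R ((2 * Q) ^ (4000 * L)) ℓ' → 16 * Real.exp (2 * L) ≤ kmZ ℓ' := by
    intro ℓ' h
    refine le_trans ?_ (kmZ_lower h (4000000 * L ^ 2) ?_)
    · calc 16 * Real.exp (2 * L) ≤ Real.exp 3 ^ 2 * Real.exp (2 * L) := by
            have := km_ten
            gcongr
            nlinarith only [this]
        _ = Real.exp (6 + 2 * L) := by rw [← Real.exp_nat_mul, ← Real.exp_add]; norm_num
        _ ≤ Real.exp (10 ^ 32 * L ^ 9 + -(7 * R * (4000000 * L ^ 2 : ℕ) + R)) := by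
            apply Real.exp_le_exp.2
            push_cast
            rw [hR]
            have e1 : (L:ℝ) ^ 7 ≤ L ^ 9 := pow_le_pow_right₀ hL1 (by norm_num)
            have e2 : (L:ℝ) ≤ L ^ 9 := le_self_pow₀ hL1 (by norm_num)
            have e3 : 7 * (10 ^ 24 * (L:ℝ) ^ 7) * (4000000 * L ^ 2) = 28 * 10 ^ 30 * L ^ 9 := by ring
            rw [e3]
            linarith only [e1, e2, hL1]
        _ = Real.exp (10 ^ 32 * L ^ 9) * Real.exp (-(7 * R * (4000000 * L ^ 2 : ℕ) + R)) := Real.exp_add _ _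
        _ ≤ _ := by gcongr
    · have e1 : (2 * Q) ^ (4000 * L) ≤ Real.exp 1 ^ (1840000 * L ^ 2) := by
        calc (2 * Q) ^ (4000 * L) ≤ Real.exp (460 * L) ^ (4000 * L) := by gcongr
          _ = _ := by
            rw [← Real.exp_nat_mul, ← Real.exp_nat_mul]; congr 1; push_cast; ring
      have e2 : Real.exp 1 ^ (1840000 * L ^ 2) ≤ ((2:ℝ) ^ 2) ^ (1840000 * L ^ 2) := by
        have := Real.exp_one_lt_three
        gcongr; linarith
      calc 2 * (2 * Q) ^ (4000 * L) ≤ 2 ^ 1 * ((2:ℝ) ^ 2) ^ (1840000 * L ^ 2) := by linarith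
        _ = 2 ^ (1 + 2 * (1840000 * L ^ 2)) := by rw [← pow_mul, ← pow_add]
        _ ≤ _ := by
          apply pow_le_pow_right₀ (by norm_num)
          have : 1 ≤ L ^ 2 := Nat.one_le_pow _ _ hL
          omega
  have hMp : 0 ≤ M := by rw [hM]; positivity
  have key : ∀ i : ℕ, i ≤ 4000 * L → ∃ (ℓ : G → ℝ) (x : G), KmIs (i * M) ((2 * Q) ^ i) ℓ ∧
      1.0005 ^ i * Real.exp (-L) ≤ kmCr (kmM ℓ) f x := by
    intro i
    induction i with
    | zero =>
      intro _
      refine ⟨fun _ => 0, 0, KmIs.zero.mono (by simp) (by simp), ?_⟩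
      have hc : (0:ℝ) < Fintype.card G := by exact_mod_cast Fintype.card_pos
      have : kmCr (kmM (fun _ : G => 0)) f 0 = (∑ x, f x) / Fintype.card G := by
        simp [kmCr, kmM, kmZ, ← Finset.mul_sum, div_eq_inv_mul]
      rw [this, le_div_iff₀ hc]; simpa using hd
    | succ i ih =>
      intro hi
      obtain ⟨ℓ, x, h1, h2⟩ := ih (by omega)
      by_contra hcon
      push Not at hcon
      have hb1 : 1 ≤ (2 * Q) ^ i := one_le_pow₀ (by linarith)
      have hpow : 1 ≤ (1.0005:ℝ) ^ i := one_le_pow₀ (by norm_num)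
      have hE := Real.exp_pos (-(L:ℝ))
      have hb2 : Q * ((2 * Q) ^ i + 1) ≤ (2 * Q) ^ (i + 1) := by
        rw [pow_succ]; nlinarith only [hb1, hQ1]
      refine km_step f f01 H hH h3 L hL h1 (by positivity) x _ rfl (le_trans ?_ h2) M R K1 K2 K K4
        (Q * ((2 * Q) ^ i + 1)) hM ?_ hK1 hK2 hK hK4 (by rw [hQ]) ?_ ?_
      · nlinarith only [hpow, hE]
      · have : (i:ℝ) + 1 ≤ 4000 * L := by exact_mod_cast hi
        have h7 : (1:ℝ) ≤ L ^ 7 := one_le_pow₀ hL1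
        have := mul_le_mul_of_nonneg_right this hMp
        have e : 4000 * L * M = 8 * 10 ^ 23 * L ^ 7 := by rw [hM]; ring
        rw [e] at this
        rw [hR]; linarith
      · intro ℓ' h'
        refine hZ ℓ' (h'.mono le_rfl (hb2.trans ?_))
        exact pow_le_pow_right₀ (by linarith) hi
      · intro ℓ' x' h'
        have := hcon ℓ' x' (h'.mono (by push_cast; linarith) hb2)
        rw [pow_succ] at this
        linarith
  obtain ⟨ℓ, x, h1, h2⟩ := key (4000 * L) le_rfl
  have e1 : kmCr (kmM ℓ) f x ≤ 1 := by
    rw [← kmM_sum ℓ]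
    exact Finset.sum_le_sum fun t _ => mul_le_of_le_one_right (kmM_pos _ _).le (f1 _)
  have e2 : (3:ℝ) ≤ 1.0005 ^ 4000 := by
    have := one_add_mul_le_pow (a := (0.0005:ℝ)) (by norm_num) 4000
    rw [show (1.0005:ℝ) = 1 + 0.0005 by norm_num]
    refine le_trans ?_ this
    norm_num
  have e3 : Real.exp L < 1.0005 ^ (4000 * L) := by
    rw [pow_mul]
    calc Real.exp L = Real.exp 1 ^ L := by rw [← Real.exp_nat_mul]; simp
      _ < 3 ^ L := pow_lt_pow_left₀ Real.exp_one_lt_three (Real.exp_pos _).le (by omega)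
      _ ≤ _ := by gcongr
  have e4 : Real.exp L * Real.exp (-(L:ℝ)) = 1 := by rw [← Real.exp_add]; simp
  have := mul_lt_mul_of_pos_right e3 (Real.exp_pos (-(L:ℝ)))
  linarith
end KM11

open Finset
set_option linter.unusedSectionVars false
set_option linter.unusedVariables false

lemma km_triv (d : ℕ) (hd : 1 ≤ d) (A A1 A2 : Finset ℤ) (h1 : A1 ⊆ A) (h2 : A2 ⊆ A) (hdis : Disjoint A1 A2)
    (hsol : ∀ v : Fin 6 → ℤ, (∀ i, v i ∈ A) →
        (∑ i, ![(1 : ℤ), 1, (d : ℤ), (d : ℤ), -2, -2 * (d : ℤ)] i * v i) = 0 →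
        ∀ α : ℤ, (∑ i ∈ Finset.univ.filter (fun i => v i = α),
          ![(1 : ℤ), 1, (d : ℤ), (d : ℤ), -2, -2 * (d : ℤ)] i) = 0)
    (x1 x2 x3 y1 y2 y3 : ℤ) (a1 : x1 ∈ A1) (a2 : x2 ∈ A1) (a3 : x3 ∈ A1) (b1 : y1 ∈ A2) (b2 : y2 ∈ A2)
    (b3 : y3 ∈ A2) (he : (x1 + d * y1) + (x3 + d * y3) = 2 * (x2 + d * y2)) :
    x1 = x2 ∧ x3 = x2 ∧ y1 = y2 ∧ y3 = y2 := by
  have ne : ∀ x ∈ A1, ∀ y ∈ A2, y ≠ x := fun x hx y hy h => Finset.disjoint_left.1 hdis hx (h ▸ hy)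
  have ne' : ∀ x ∈ A1, ∀ y ∈ A2, x ≠ y := fun x hx y hy h => ne x hx y hy h.symm
  have key := hsol ![x1, x3, y1, y3, x2, y2] (by
    intro i
    fin_cases i
    exacts [h1 a1, h1 a3, h2 b1, h2 b3, h1 a2, h2 b2]) (by
    simp [Fin.sum_univ_succ]; linarith)
  have k1 := key x2
  have k2 := key y2
  rw [Finset.sum_filter] at k1 k2
  simp [Fin.sum_univ_succ, ne x2 a2 y1 b1, ne x2 a2 y2 b2, ne x2 a2 y3 b3] at k1
  simp [Fin.sum_univ_succ, ne' x1 a1 y2 b2, ne' x2 a2 y2 b2, ne' x3 a3 y2 b2] at k2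
  have hd' : (1:ℤ) ≤ d := by exact_mod_cast hd
  have k1' : (if x1 = x2 then (1:ℤ) else 0) + ((if x3 = x2 then (1:ℤ) else 0) + -2) = 0 := by
    exact k1
  have k2' : (if y1 = y2 then (d:ℤ) else 0) + ((if y3 = y2 then (d:ℤ) else 0) + -(2 * (d:ℤ))) = 0 := by
    exact k2
  clear k1 k2
  refine ⟨?_, ?_, ?_, ?_⟩
  · by_contra h; rw [if_neg h] at k1'; split_ifs at k1' <;> omega
  · by_contra h; rw [if_neg h] at k1'; split_ifs at k1' <;> omega
  · by_contra h; rw [if_neg h] at k2'; split_ifs at k2' <;> omega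
  · by_contra h; rw [if_neg h] at k2'; split_ifs at k2' <;> omega

lemma km_card (d : ℕ) (hd : 1 ≤ d) (N : ℕ) (hN : 2 ≤ N) (A : Finset ℤ) (hA : A ⊆ Finset.Icc 1 (N : ℤ))
    (hsol : ∀ v : Fin 6 → ℤ, (∀ i, v i ∈ A) →
        (∑ i, ![(1 : ℤ), 1, (d : ℤ), (d : ℤ), -2, -2 * (d : ℤ)] i * v i) = 0 →
        ∀ α : ℤ, (∑ i ∈ Finset.univ.filter (fun i => v i = α),
          ![(1 : ℤ), 1, (d : ℤ), (d : ℤ), -2, -2 * (d : ℤ)] i) = 0)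
    (L : ℕ) (hL : 10 ^ 32 * (L:ℝ) ^ 9 ≤ Real.log N) : (A.card : ℝ) ^ 2 ≤ 40 * d * Real.exp (-L) * N := by
  have hN0 : (0:ℝ) < N := by positivity
  have hd1 : (1:ℝ) ≤ d := by exact_mod_cast hd
  by_cases hc : A.card ≤ 1
  · have h1 : (L:ℝ) ≤ Real.log N := by
      refine le_trans ?_ hL
      rcases Nat.eq_zero_or_pos L with h | h
      · rw [h]; simp
      · have : (1:ℝ) ≤ L := by exact_mod_cast h
        have : (L:ℝ) ≤ L ^ 9 := le_self_pow₀ this (by norm_num)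
        have : (0:ℝ) ≤ L ^ 9 := by positivity
        linarith
    have h2 : Real.exp L ≤ N := by
      calc _ ≤ Real.exp (Real.log N) := Real.exp_le_exp.2 h1
        _ = N := Real.exp_log hN0
    have h3 : 1 ≤ Real.exp (-L) * N := by
      rw [Real.exp_neg, ← div_eq_inv_mul, le_div_iff₀ (Real.exp_pos _)]; linarith
    have h4 : (A.card : ℝ) ≤ 1 := by exact_mod_cast hc
    have h5 : (0:ℝ) ≤ A.card := by positivity
    nlinarith only [h3, h4, h5, hd1]
  push Not at hc
  obtain ⟨A1, hA1, hA1c⟩ := Finset.exists_subset_card_eq (s := A) (n := A.card / 2) (by omega)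
  set A2 := A \ A1 with hA2d
  have hA2 : A2 ⊆ A := Finset.sdiff_subset
  have hdis : Disjoint A1 A2 := Finset.disjoint_sdiff
  have hA2c : A2.card = A.card - A.card / 2 := by rw [hA2d, Finset.card_sdiff_of_subset hA1, hA1c]
  have htriv := km_triv d hd A A1 A2 hA1 hA2 hdis hsol
  set n : ℕ := 2 * ((d + 1) * N) + 1 with hn
  haveI : NeZero n := ⟨by omega⟩
  set Ψ : ℤ × ℤ → ZMod n := fun p => ((p.1 + d * p.2 : ℤ) : ZMod n) with hΨ
  have hr : ∀ x ∈ A, 1 ≤ x ∧ x ≤ N := fun x hx => by simpa using hA hx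
  have h3 : ∀ p ∈ A1 ×ˢ A2, ∀ q ∈ A1 ×ˢ A2, ∀ s ∈ A1 ×ˢ A2, Ψ p + Ψ s = Ψ q + Ψ q → p = q ∧ s = q := by
    intro p hp q hq s hs he
    rw [Finset.mem_product] at hp hq hs
    have bd : ∀ p : ℤ × ℤ, p.1 ∈ A1 ∧ p.2 ∈ A2 → 1 ≤ p.1 + d * p.2 ∧ p.1 + d * p.2 ≤ (d + 1) * N := by
      intro p hp
      have u1 := hr _ (hA1 hp.1)
      have u2 := hr _ (hA2 hp.2)
      have hd' : (1:ℤ) ≤ d := by exact_mod_cast hd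
      constructor <;> nlinarith
    have c1 := bd p hp
    have c2 := bd q hq
    have c3 := bd s hs
    have he' : (((p.1 + d * p.2) + (s.1 + d * s.2) - 2 * (q.1 + d * q.2) : ℤ) : ZMod n) = 0 := by
      simp only [hΨ] at he
      push_cast at he ⊢
      rw [he]; ring
    rw [ZMod.intCast_zmod_eq_zero_iff_dvd] at he'
    have he2 : (p.1 + d * p.2) + (s.1 + d * s.2) - 2 * (q.1 + d * q.2) = 0 := by
      apply Int.eq_zero_of_abs_lt_dvd he'
      rw [hn, abs_lt]; push_cast
      constructor <;> linarith
    obtain ⟨e1, e2, e3, e4⟩ := htriv p.1 q.1 s.1 p.2 q.2 s.2 hp.1 hq.1 hs.1 hp.2 hq.2 hs.2 (by linarith)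
    exact ⟨Prod.ext e1 e3, Prod.ext e2 e4⟩
  have hinj : Set.InjOn Ψ (A1 ×ˢ A2 : Finset (ℤ × ℤ)) := by
    intro p hp q hq h
    exact (h3 p hp q hq p hp (by rw [h])).1
  set B := (A1 ×ˢ A2).image Ψ with hB
  have hBc : B.card = A1.card * A2.card := by rw [hB, Finset.card_image_of_injOn hinj, Finset.card_product]
  have hA8 : (A.card:ℝ) ^ 2 ≤ 8 * B.card := by
    have : A.card ^ 2 ≤ 8 * B.card := by
      rw [hBc, hA1c, hA2c]
      obtain ⟨k, hk | hk⟩ := Nat.even_or_odd' A.card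
      · rw [hk, show 2 * k / 2 = k by omega, show 2 * k - k = k by omega]; nlinarith
      · rw [hk, show (2 * k + 1) / 2 = k by omega, show 2 * k + 1 - k = k + 1 by omega]
        have : 1 ≤ k := by omega
        nlinarith
    exact_mod_cast this
  have hn5 : (n:ℝ) ≤ 5 * d * N := by
    have : n ≤ 5 * d * N := by rw [hn]; nlinarith
    exact_mod_cast this
  have hnN : (N:ℝ) ≤ n := by
    have : N ≤ n := by rw [hn]; nlinarith
    exact_mod_cast this
  suffices hs : (B.card : ℝ) ≤ Real.exp (-L) * n by
    have := mul_le_mul_of_nonneg_left hn5 (Real.exp_pos (-(L:ℝ))).le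
    linarith
  rcases Nat.eq_zero_or_pos L with h0 | hLp
  · rw [h0]; simp
    have := Finset.card_le_univ B
    rwa [ZMod.card] at this
  by_contra hcon
  push Not at hcon
  have hH : ∀ t : ZMod n, AddMonoidHom.mulLeft (((d + 1) * N + 1 : ℕ) : ZMod n) t + AddMonoidHom.mulLeft (((d + 1) * N + 1 : ℕ) : ZMod n) t = t := by
    intro t
    have e : ((n : ℕ) : ZMod n) = 0 := ZMod.natCast_self n
    rw [hn] at e
    push_cast at e
    simp only [AddMonoidHom.coe_mulLeft]
    push_cast
    linear_combination t * e
  refine km_iterate (G := ZMod n) (fun g => if g ∈ B then 1 else 0) (fun x => by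
      split_ifs <;> simp) (AddMonoidHom.mulLeft (((d + 1) * N + 1 : ℕ) : ZMod n)) hH ?_ L hLp ?_ ?_
  · intro x y z hx hy hz hxyz
    simp only [ite_eq_left_iff, zero_ne_one, imp_false, not_not] at hx hy hz
    rw [hB, Finset.mem_image] at hx hy hz
    obtain ⟨p, hp, rfl⟩ := hx
    obtain ⟨q, hq, rfl⟩ := hy
    obtain ⟨s, hs, rfl⟩ := hz
    obtain ⟨u1, u2⟩ := h3 p hp q hq s hs hxyz
    rw [u1, u2]
  · rw [ZMod.card]; simp; linarith
  · rw [ZMod.card]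
    calc _ ≤ Real.exp (Real.log N) := Real.exp_le_exp.2 hL
      _ = N := Real.exp_log hN0
      _ ≤ n := hnN

theorem statement16 (d : ℕ) (hd : 1 ≤ d) :
    ∃ c C : ℝ, 0 < c ∧ 0 < C ∧ ∀ N : ℕ, 2 ≤ N → ∀ A : Finset ℤ,
      A ⊆ Finset.Icc 1 (N : ℤ) →
      (∀ v : Fin 6 → ℤ, (∀ i, v i ∈ A) →
        (∑ i, ![(1 : ℤ), 1, (d : ℤ), (d : ℤ), -2, -2 * (d : ℤ)] i * v i) = 0 →
        ∀ α : ℤ, (∑ i ∈ Finset.univ.filter (fun i => v i = α),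
          ![(1 : ℤ), 1, (d : ℤ), (d : ℤ), -2, -2 * (d : ℤ)] i) = 0) →
      (A.card : ℝ) ≤ C * Real.exp (-c * (Real.log N) ^ ((1 : ℝ) / 9)) *
        (N : ℝ) ^ ((1 : ℝ) / 2) := by
  have hd1 : (1:ℝ) ≤ d := by exact_mod_cast hd
  refine ⟨1 / 20000, 120 * d, by norm_num, by positivity, ?_⟩
  intro N hN A hA hsol
  have hN1 : (2:ℝ) ≤ N := by exact_mod_cast hN
  have hlog : 0 ≤ Real.log N := Real.log_nonneg (by linarith)
  set x := (Real.log N) ^ ((1 : ℝ) / 9) with hx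
  have hx0 : 0 ≤ x := Real.rpow_nonneg hlog _
  have hx9 : x ^ 9 = Real.log N := by
    rw [hx, ← Real.rpow_natCast, ← Real.rpow_mul hlog]; norm_num
  set L := ⌊x / 10000⌋₊ with hL
  have hL1 : (L:ℝ) ≤ x / 10000 := Nat.floor_le (by positivity)
  have hL2 : x / 10000 < L + 1 := Nat.lt_floor_add_one _
  have hcard := km_card d hd N hN A hA hsol L (by
    rw [← hx9]
    have : (L:ℝ) ^ 9 ≤ (x / 10000) ^ 9 := by gcongr
    have e : (x / 10000) ^ 9 = x ^ 9 / 10 ^ 36 := by rw [div_pow]; norm_num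
    rw [e] at this
    have : 0 ≤ x ^ 9 := by positivity
    linarith)
  have hE : Real.exp (-L) ≤ 3 * Real.exp (-(1 / 20000) * x) ^ 2 := by
    have e1 : Real.exp (-(1 / 20000) * x) ^ 2 = Real.exp (-(x / 10000)) := by
      rw [← Real.exp_nat_mul]; congr 1; push_cast; ring
    rw [e1]
    calc Real.exp (-(L:ℝ)) ≤ Real.exp (1 + -(x / 10000)) := Real.exp_le_exp.2 (by linarith)
      _ = Real.exp 1 * Real.exp (-(x / 10000)) := Real.exp_add _ _
      _ ≤ _ := by
        have := Real.exp_one_lt_three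
        gcongr
  have hs : ((N:ℝ) ^ ((1 : ℝ) / 2)) ^ 2 = N := by
    rw [← Real.sqrt_eq_rpow, Real.sq_sqrt (by positivity)]
  refine le_of_sq_le_sq ?_ (by positivity)
  rw [mul_pow, mul_pow, hs]
  refine hcard.trans (mul_le_mul_of_nonneg_right ?_ (by positivity))
  calc 40 * d * Real.exp (-L) ≤ 40 * d * (3 * Real.exp (-(1 / 20000) * x) ^ 2) := by gcongr
    _ = 120 * d * Real.exp (-(1 / 20000) * x) ^ 2 := by ring
    _ ≤ _ := by
      gcongr
      nlinarith
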